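/- arXiv:1911.08154 — 2 statements merged into one kernel-verified Lean document; each statement's English description precedes it below -/
import Mathlib

section
/- Let m be a positive integer and T a tree on 3m + 2 vertices. Then the number of maximum dissociation sets of T is at most 3^{m−1}. -/
open SimpleGraph

/-- `l` is a (not necessarily induced) `k`-path in `G`: a list of `k` pairwise distinct
vertices in which consecutive vertices are adjacent. -/
def IsKPath {V : Type*} (G : SimpleGraph V) (k : ℕ) (l : List V) : Prop :=
  l.length = k ∧ l.Nodup ∧ l.Chain' G.Adj

/-- A `k`-matching in `G`: a finite set of pairwise vertex-disjoint `k`-paths. -/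
def IsKMatching {V : Type*} (G : SimpleGraph V) (k : ℕ) (M : Finset (List V)) : Prop :=
  (∀ l ∈ M, IsKPath G k l) ∧
    (M : Set (List V)).Pairwise fun l₁ l₂ => ∀ v ∈ l₁, v ∉ l₂

/-- The `k`-matching number `μ_k(G)`: the maximum cardinality of a `k`-matching. -/
noncomputable def kMatchNum {V : Type*} (G : SimpleGraph V) (k : ℕ) : ℕ :=
  sSup {n | ∃ M : Finset (List V), IsKMatching G k M ∧ M.card = n}

/-- A maximum `k`-matching: a `k`-matching of cardinality `μ_k(G)`. -/
def IsMaxKMatching {V : Type*} (G : SimpleGraph V) (k : ℕ) (M : Finset (List V)) : Prop :=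
  IsKMatching G k M ∧ M.card = kMatchNum G k

/-- A `k`-independent set: a set of vertices whose induced subgraph contains no `k`-path. -/
def IsKIndepSet {V : Type*} (G : SimpleGraph V) (k : ℕ) (S : Finset V) : Prop :=
  ∀ l : List V, IsKPath G k l → ¬ (∀ v ∈ l, v ∈ S)

/-- The `k`-independence number `α_k(G)`. -/
noncomputable def kIndepNum {V : Type*} (G : SimpleGraph V) (k : ℕ) : ℕ :=
  sSup {n | ∃ S : Finset V, IsKIndepSet G k S ∧ S.card = n}

/-- A `k`-vertex cover: a set of vertices meeting every `k`-path of `G`. -/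
def IsKCover {V : Type*} (G : SimpleGraph V) (k : ℕ) (C : Finset V) : Prop :=
  ∀ l : List V, IsKPath G k l → ∃ v ∈ l, v ∈ C

/-- The `k`-vertex cover number `τ_k(G)`. -/
noncomputable def kCoverNum {V : Type*} (G : SimpleGraph V) (k : ℕ) : ℕ :=
  sInf {n | ∃ C : Finset V, IsKCover G k C ∧ C.card = n}

/-- A dissociation set: a set of vertices inducing a subgraph of maximum degree at most 1,
i.e. every vertex of `S` has at most one neighbour inside `S`. -/
def IsDissocSet {V : Type*} (G : SimpleGraph V) (S : Finset V) : Prop :=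
  ∀ v ∈ S, ∀ u ∈ S, ∀ w ∈ S, G.Adj v u → G.Adj v w → u = w

/-- The dissociation number `α₃(G)`. -/
noncomputable def dissNum {V : Type*} (G : SimpleGraph V) : ℕ :=
  sSup {n | ∃ S : Finset V, IsDissocSet G S ∧ S.card = n}

/-- A maximum dissociation set: a dissociation set of cardinality `α₃(G)`. -/
def IsMaxDissocSet {V : Type*} (G : SimpleGraph V) (S : Finset V) : Prop :=
  IsDissocSet G S ∧ S.card = dissNum G

/-- `uv` is an `α₃`-critical edge of `G`: deleting it increases the dissociation number. -/
def IsAlpha3Critical {V : Type*} (G : SimpleGraph V) (u v : V) : Prop :=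
  G.Adj u v ∧ dissNum G < dissNum (G.deleteEdges {s(u, v)})

/-- `uv` is a `μ₃`-critical edge of `G`: deleting it decreases the `3`-matching number. -/
def IsMu3Critical {V : Type*} (G : SimpleGraph V) (u v : V) : Prop :=
  G.Adj u v ∧ kMatchNum (G.deleteEdges {s(u, v)}) 3 < kMatchNum G 3

/-- An insulated `α₃`-critical edge: an `α₃`-critical edge sharing no end-vertex with any
other `α₃`-critical edge. -/
def IsInsulated {V : Type*} (G : SimpleGraph V) (u v : V) : Prop :=
  IsAlpha3Critical G u v ∧
    ∀ x y : V, IsAlpha3Critical G x y → s(x, y) ≠ s(u, v) →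
      x ≠ u ∧ x ≠ v ∧ y ≠ u ∧ y ≠ v

/-- A flexible vertex: one lying in some but not all maximum dissociation sets. -/
def IsFlexible {V : Type*} (G : SimpleGraph V) (v : V) : Prop :=
  (∃ S : Finset V, IsMaxDissocSet G S ∧ v ∈ S) ∧
    (∃ S : Finset V, IsMaxDissocSet G S ∧ v ∉ S)

/-- The set of static-included vertices: vertices lying in every maximum dissociation set. -/
def staticIncluded {V : Type*} (G : SimpleGraph V) : Set V :=
  {v | ∀ S : Finset V, IsMaxDissocSet G S → v ∈ S}

/-- The set of static-excluded vertices: vertices lying in no maximum dissociation set. -/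
def staticExcluded {V : Type*} (G : SimpleGraph V) : Set V :=
  {v | ∀ S : Finset V, IsMaxDissocSet G S → v ∉ S}

/-- The (unordered) edge `uv` occurs as an edge of the path recorded by the list `l`. -/
def EdgeInList {V : Type*} (l : List V) (u v : V) : Prop :=
  ∃ p ∈ l.zip l.tail, p = (u, v) ∨ p = (v, u)

/-!
Complements of maximum dissociation sets are the minimum 3-path covers. A König-type duality
holds in a forest: root it and repeatedly pick a path whose vertex closest to the root is as deep
as possible; that vertex meets every path intersecting the chosen one, so the picked paths form a
matching and their topmost vertices a cover of the same size. Hence every minimum cover `C` is a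
transversal of a fixed maximum 3-matching `M`, and there are at most `3 ^ M.card` of these.

To save a factor of three, use two vertices `x` and `y` outside `M`, which no minimum cover
contains. If two vertices outside `M` are adjacent, a vertex next to that edge lies in every
cover. Otherwise `x` and `y` have neighbours on paths of `M`. The covering condition at the path
`l` next to `x`, together with an edge from `l ∪ {x}` to a vertex `w` outside, forces a vertex
`s ∈ l` into every `C`, unless `w ∈ C` and a second vertex `t ∈ l` is forced. If `y` is adjacent
to `l`, take `w = y`: the exception never occurs. If `y` is adjacent to a different path, one
vertex of that path lies in no `C`, and the two cases add up to
`(3 - 1) * 3 ^ (M.card - 2) + 3 ^ (M.card - 2)`.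
-/

theorem exists_pairwiseDisjoint_forall_exists_mem {ι α β : Type*} [LinearOrder β] (A : ι → Set α)
    (top : ι → α) (d : ι → β) (s : Finset ι) (hne : ∀ i ∈ s, (A i).Nonempty)
    (htop : ∀ i ∈ s, ∀ j ∈ s, d i ≤ d j → ¬ Disjoint (A i) (A j) → top j ∈ A i) :
    ∃ M ⊆ s, ∃ C : Finset α, (M : Set ι).PairwiseDisjoint A ∧
      (∀ i ∈ s, ∃ v ∈ A i, v ∈ C) ∧ C.card ≤ M.card := by
  classical
  induction s using Finset.strongInduction with
  | H s ih =>
    obtain rfl | hs := s.eq_empty_or_nonempty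
    · exact ⟨∅, by simp, ∅, by simp⟩
    obtain ⟨j, hj, hmax⟩ := s.exists_max_image d hs
    have hjA : top j ∈ A j :=
      htop j hj j hj le_rfl (disjoint_self.not.2 (hne j hj).ne_empty)
    -- By maximality of `d j`, the sets missing `top j` are precisely those disjoint from `A j`.
    let s' := s.filter fun i => top j ∉ A i
    have hs' : s' ⊆ s := Finset.filter_subset _ _
    have hdisj : ∀ i ∈ s', Disjoint (A j) (A i) := fun i hi => by
      obtain ⟨his, hiA⟩ := Finset.mem_filter.1 hi
      exact (not_not.1 fun h => hiA (htop i his j hj (hmax i his) h)).symm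
    obtain ⟨M, hMs, C, hM, hC, hcard⟩ := ih s' (Finset.filter_ssubset.2 ⟨j, hj, not_not.2 hjA⟩)
      (fun i hi => hne i (hs' hi)) fun i hi k hk => htop i (hs' hi) k (hs' hk)
    have hjM : j ∉ M := fun h => (Finset.mem_filter.1 (hMs h)).2 hjA
    refine ⟨insert j M, Finset.insert_subset hj (hMs.trans hs'), insert (top j) C, ?_, ?_, ?_⟩
    · rw [Finset.coe_insert]
      exact hM.insert fun i hi _ => hdisj i (hMs hi)
    · intro i hi
      by_cases hiA : top j ∈ A i
      · exact ⟨top j, hiA, Finset.mem_insert_self _ _⟩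
      · obtain ⟨v, hvA, hvC⟩ := hC i (Finset.mem_filter.2 ⟨hi, hiA⟩)
        exact ⟨v, hvA, Finset.mem_insert_of_mem hvC⟩
    · rw [Finset.card_insert_of_notMem hjM]
      exact (Finset.card_insert_le _ _).trans (Nat.succ_le_succ hcard)

section Dominates

variable {V : Type*} {G : SimpleGraph V} {r s t u v : V} {l l' : List V}

/-- `t` dominates `v` with respect to the root `r`: every walk from `r` to `v` visits `t`. In a
tree rooted at `r` this says that `t` is an ancestor of `v` or `v` itself. -/
def Dominates (G : SimpleGraph V) (r t v : V) : Prop :=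
  ∀ p : G.Walk r v, t ∈ p.support

theorem Dominates.refl : Dominates G r v v := fun p => p.end_mem_support

theorem Dominates.trans (hst : Dominates G r s t) (htv : Dominates G r t v) :
    Dominates G r s v := by
  classical
  intro p
  exact p.support_takeUntil_subset_support (htv p) (hst (p.takeUntil t (htv p)))

theorem Dominates.of_adj (h : Dominates G r t u) (huv : G.Adj u v) (hut : u ≠ t) :
    Dominates G r t v := by
  intro p
  have := h (p.concat huv.symm)
  rw [Walk.support_concat, List.mem_append, List.mem_singleton] at this
  exact this.resolve_right hut.symm

theorem Dominates.eq_of_dist_le (h : Dominates G r t v) (hr : G.Reachable r v)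
    (hd : G.dist r v ≤ G.dist r t) : v = t := by
  classical
  obtain ⟨p, hp⟩ := hr.exists_walk_length_eq_dist
  by_contra hne
  have hlt : (p.takeUntil t (h p)).length < p.length :=
    Walk.length_takeUntil_lt_length (h p) (Ne.symm hne)
  have := dist_le (p.takeUntil t (h p))
  omega

theorem dominates_or_dominates_of_adj (hG : G.IsAcyclic) (r : V) (huv : G.Adj u v) :
    Dominates G r u v ∨ Dominates G r v u := by
  classical
  by_contra! h
  simp only [Dominates, not_forall] at h
  obtain ⟨⟨p, hp⟩, q, hq⟩ := h
  have hp' : u ∉ p.bypass.support := fun h => hp (p.support_bypass_subset_support h)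
  exact hq (q.support_bypass_subset_support
    (hG.mem_support_of_ne_mem_support_of_adj_of_isPath q.bypass_isPath p.bypass_isPath huv hp'))

theorem exists_mem_forall_dominates (hG : G.IsAcyclic) (r : V) (hl : l.IsChain G.Adj)
    (hne : l ≠ []) : ∃ t ∈ l, ∀ v ∈ l, Dominates G r t v := by
  induction l with
  | nil => contradiction
  | cons a l ih =>
    cases l with
    | nil => exact ⟨a, by simp, by simp [Dominates.refl]⟩
    | cons b l =>
      obtain ⟨hab, hl⟩ := List.isChain_cons_cons.1 hl
      obtain ⟨t, ht, hdom⟩ := ih hl (List.cons_ne_nil _ _)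
      have hb : Dominates G r t b := hdom b List.mem_cons_self
      by_cases ha : Dominates G r t a
      · exact ⟨t, List.mem_cons_of_mem _ ht, List.forall_mem_cons.2 ⟨ha, hdom⟩⟩
      · obtain rfl : b = t := by_contra fun hbt => ha (hb.of_adj hab.symm hbt)
        have hab' := (dominates_or_dominates_of_adj hG r hab).resolve_right ha
        exact ⟨a, List.mem_cons_self,
          List.forall_mem_cons.2 ⟨.refl, fun v hv => hab'.trans (hdom v hv)⟩⟩

theorem Dominates.forall_mem_of_isChain (hl : l.IsChain G.Adj) (ht : t ∉ l) (hu : u ∈ l)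
    (h : Dominates G r t u) : ∀ v ∈ l, Dominates G r t v := by
  let R := fun a b => (Dominates G r t a ↔ Dominates G r t b)
  have : IsTrans V R := ⟨fun _ _ _ => Iff.trans⟩
  have : Std.Symm R := ⟨fun _ _ => Iff.symm⟩
  have hR : l.IsChain R := hl.imp_of_mem_imp fun a b ha hb hab =>
    ⟨fun h => h.of_adj hab (ne_of_mem_of_not_mem ha ht),
      fun h => h.of_adj hab.symm (ne_of_mem_of_not_mem hb ht)⟩
  intro v hv
  have huv : R u v := List.Pairwise.forall_of_forall (R := R) (fun _ _ => Iff.rfl)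
    (List.isChain_iff_pairwise.1 hR) hu hv
  exact huv.1 h

/-- Two intersecting subtrees of a rooted tree share the deeper of their two roots. -/
theorem mem_of_dominates_of_dist_le (hG : G.Preconnected) (hl : l.IsChain G.Adj) (hs : s ∈ l)
    (ht : ∀ v ∈ l', Dominates G r t v) (hd : G.dist r s ≤ G.dist r t) (hu : u ∈ l)
    (hu' : u ∈ l') : t ∈ l := by
  by_contra htl
  have hts : Dominates G r t s := (ht u hu').forall_mem_of_isChain hl htl hu s hs
  exact htl (hts.eq_of_dist_le (hG r s) hd ▸ hs)

end Dominates

section Transversal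

variable {ι α : Type*} {A B : ι → Finset α} {𝒞 : Finset (Finset α)} {C : Finset α} {i j l : ι}
  {n : ℕ}

/-- `C` is a transversal of the family `A`: it is contained in the union of the `A i` and meets
each of them in exactly one point. -/
def IsTransversal (A : ι → Finset α) (C : Finset α) : Prop :=
  (∀ v ∈ C, ∃ i, v ∈ A i) ∧ ∀ i, ∃! v, v ∈ C ∧ v ∈ A i

variable [Fintype ι]

theorem card_le_prod_card (h𝒞 : ∀ C ∈ 𝒞, IsTransversal A C)
    (hB : ∀ C ∈ 𝒞, ∀ i, ∀ v ∈ C, v ∈ A i → v ∈ B i) : 𝒞.card ≤ ∏ i, (B i).card := by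
  classical
  have hsub : 𝒞 ⊆ (Fintype.piFinset B).image fun g => Finset.univ.image g := by
    intro C hC
    obtain ⟨hcover, hunique⟩ := h𝒞 C hC
    choose g hg hguniq using hunique
    refine Finset.mem_image.2
      ⟨g, Fintype.mem_piFinset.2 fun i => hB C hC i _ (hg i).1 (hg i).2, ?_⟩
    ext v
    simp only [Finset.mem_image, Finset.mem_univ, true_and]
    constructor
    · rintro ⟨i, rfl⟩
      exact (hg i).1
    · intro hv
      obtain ⟨i, hi⟩ := hcover v hv
      exact ⟨i, (hguniq i v ⟨hv, hi⟩).symm⟩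
  calc 𝒞.card ≤ _ := Finset.card_le_card hsub
    _ ≤ (Fintype.piFinset B).card := Finset.card_image_le
    _ = ∏ i, (B i).card := Fintype.card_piFinset B

theorem card_le_prod_card_mul_pow (h𝒞 : ∀ C ∈ 𝒞, IsTransversal A C) (hA : ∀ i, (A i).card ≤ n)
    (J : Finset ι) (hB : ∀ C ∈ 𝒞, ∀ i ∈ J, ∀ v ∈ C, v ∈ A i → v ∈ B i) :
    𝒞.card ≤ (∏ i ∈ J, (B i).card) * n ^ (Fintype.card ι - J.card) := by
  classical
  calc 𝒞.card ≤ ∏ i, (J.piecewise B A i).card := by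
        refine card_le_prod_card h𝒞 fun C hC i v hv hvA => ?_
        by_cases hi : i ∈ J
        · simpa [hi] using hB C hC i hi v hv hvA
        · simpa [hi] using hvA
    _ = (∏ i ∈ J, (B i).card) * ∏ i ∈ Jᶜ, (A i).card := by
        rw [← Finset.prod_mul_prod_compl J]
        congr 1
        · exact Finset.prod_congr rfl fun i hi => by rw [Finset.piecewise_eq_of_mem _ _ _ hi]
        · exact Finset.prod_congr rfl fun i hi => by
            rw [Finset.piecewise_eq_of_notMem _ _ _ (Finset.mem_compl.1 hi)]
    _ ≤ (∏ i ∈ J, (B i).card) * n ^ (Fintype.card ι - J.card) := by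
        rw [← Finset.card_compl]
        gcongr
        exact Finset.prod_le_pow_card _ _ _ fun i _ => hA i

theorem card_le_pow_of_forall_mem (h𝒞 : ∀ C ∈ 𝒞, IsTransversal A C) (hA : ∀ i, (A i).card ≤ n)
    {s : α} (hs : ∀ C ∈ 𝒞, s ∈ C) : 𝒞.card ≤ n ^ (Fintype.card ι - 1) := by
  obtain rfl | ⟨C, hC⟩ := 𝒞.eq_empty_or_nonempty
  · simp
  obtain ⟨i, hi⟩ := (h𝒞 C hC).1 s (hs C hC)
  simpa using card_le_prod_card_mul_pow (B := fun _ => {s}) h𝒞 hA {i} (by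
    simpa using fun C hC v hv hvi => ((h𝒞 C hC).2 i).unique ⟨hv, hvi⟩ ⟨hs C hC, hi⟩)

theorem card_le_card_mul_card_mul_pow (h𝒞 : ∀ C ∈ 𝒞, IsTransversal A C)
    (hA : ∀ i, (A i).card ≤ n) (hij : i ≠ j) {S T : Finset α}
    (hS : ∀ C ∈ 𝒞, ∀ v ∈ C, v ∈ A i → v ∈ S) (hT : ∀ C ∈ 𝒞, ∀ v ∈ C, v ∈ A j → v ∈ T) :
    𝒞.card ≤ S.card * T.card * n ^ (Fintype.card ι - 2) := by
  classical
  have h := card_le_prod_card_mul_pow (B := fun k => if k = i then S else T) h𝒞 hA {i, j} (by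
    intro C hC k hk v hv hvk
    obtain rfl | rfl : k = i ∨ k = j := by simpa using hk
    · simpa using hS C hC v hv hvk
    · simpa [hij.symm] using hT C hC v hv hvk)
  simpa [Finset.prod_pair hij, Finset.card_pair hij, hij.symm] using h

theorem card_le_pow_of_forall_mem_and_mem (h𝒞 : ∀ C ∈ 𝒞, IsTransversal A C)
    (hA : ∀ i, (A i).card ≤ n) {t w : α} (ht : t ∈ A i) (hw : w ∉ A i)
    (htw : ∀ C ∈ 𝒞, t ∈ C ∧ w ∈ C) : 𝒞.card ≤ n ^ (Fintype.card ι - 2) := by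
  obtain rfl | ⟨C, hC⟩ := 𝒞.eq_empty_or_nonempty
  · simp
  obtain ⟨j, hj⟩ := (h𝒞 C hC).1 w (htw C hC).2
  have hij : i ≠ j := by rintro rfl; exact hw hj
  simpa using card_le_card_mul_card_mul_pow (S := {t}) (T := {w}) h𝒞 hA hij
    (fun C hC v hv hvi =>
      Finset.mem_singleton.2 (((h𝒞 C hC).2 i).unique ⟨hv, hvi⟩ ⟨(htw C hC).1, ht⟩))
    (fun C hC v hv hvj =>
      Finset.mem_singleton.2 (((h𝒞 C hC).2 j).unique ⟨hv, hvj⟩ ⟨(htw C hC).2, hj⟩))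

theorem card_le_mul_pow_of_forall_mem_and_notMem (h𝒞 : ∀ C ∈ 𝒞, IsTransversal A C)
    (hA : ∀ i, (A i).card ≤ n) (hil : i ≠ l) {s q : α} (hs : s ∈ A i) (hq : q ∈ A l)
    (hsq : ∀ C ∈ 𝒞, s ∈ C ∧ q ∉ C) : 𝒞.card ≤ (n - 1) * n ^ (Fintype.card ι - 2) := by
  classical
  have hT : ((A l).erase q).card ≤ n - 1 := by
    rw [Finset.card_erase_of_mem hq]
    exact Nat.sub_le_sub_right (hA l) 1
  calc 𝒞.card ≤ ({s} : Finset α).card * ((A l).erase q).card * n ^ (Fintype.card ι - 2) :=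
        card_le_card_mul_card_mul_pow h𝒞 hA hil
          (fun C hC v hv hvi =>
            Finset.mem_singleton.2 (((h𝒞 C hC).2 i).unique ⟨hv, hvi⟩ ⟨(hsq C hC).1, hs⟩))
          (fun C hC v hv hvl =>
            Finset.mem_erase.2 ⟨ne_of_mem_of_not_mem hv (hsq C hC).2, hvl⟩)
    _ ≤ (n - 1) * n ^ (Fintype.card ι - 2) := by
        rw [Finset.card_singleton, one_mul]
        gcongr

theorem card_le_pow_of_forall_mem_or_mem_and_mem (h𝒞 : ∀ C ∈ 𝒞, IsTransversal A C)
    (hA : ∀ i, (A i).card ≤ n) (hil : i ≠ l) {s t w q : α} (hs : s ∈ A i) (ht : t ∈ A i)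
    (hw : w ∉ A i) (hq : q ∈ A l) (hstw : ∀ C ∈ 𝒞, s ∈ C ∨ t ∈ C ∧ w ∈ C)
    (hqC : ∀ C ∈ 𝒞, q ∉ C) : 𝒞.card ≤ n ^ (Fintype.card ι - 1) := by
  classical
  have hn : 1 ≤ n := (Finset.card_pos.2 ⟨s, hs⟩).trans_le (hA i)
  have hι : 1 < Fintype.card ι := Fintype.one_lt_card_iff.2 ⟨i, l, hil⟩
  have hwith : (𝒞.filter (s ∈ ·)).card ≤ (n - 1) * n ^ (Fintype.card ι - 2) := by
    apply card_le_mul_pow_of_forall_mem_and_notMem (A := A) _ hA hil hs hq <;> grind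
  have hwithout : (𝒞.filter (s ∉ ·)).card ≤ n ^ (Fintype.card ι - 2) := by
    apply card_le_pow_of_forall_mem_and_mem (A := A) _ hA ht hw <;> grind
  calc 𝒞.card = (𝒞.filter (s ∈ ·)).card + (𝒞.filter (s ∉ ·)).card :=
        (Finset.card_filter_add_card_filter_not _).symm
    _ ≤ (n - 1) * n ^ (Fintype.card ι - 2) + n ^ (Fintype.card ι - 2) :=
        add_le_add hwith hwithout
    _ = n ^ (Fintype.card ι - 1) := by
        rw [← Nat.succ_mul, Nat.succ_eq_add_one, Nat.sub_add_cancel hn, ← pow_succ']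
        congr 1
        omega

end Transversal

section KPath

variable {V : Type*} {G : SimpleGraph V} {k : ℕ} {l : List V} {M : Finset (List V)}
  {C S : Finset V}

theorem IsKPath.ne_nil (hl : IsKPath G k l) (hk : k ≠ 0) : l ≠ [] := by
  rintro rfl
  exact hk hl.1.symm

theorem isKPath_three_iff :
    IsKPath G 3 l ↔ ∃ a b c, l = [a, b, c] ∧ G.Adj a b ∧ G.Adj b c ∧ a ≠ c := by
  constructor
  · rintro ⟨hlen, hnodup, hchain⟩
    obtain ⟨a, b, c, rfl⟩ := List.length_eq_three.1 hlen
    have hchain : List.IsChain G.Adj [a, b, c] := hchain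
    obtain ⟨hab, hbc⟩ : G.Adj a b ∧ G.Adj b c := by simpa using hchain
    exact ⟨a, b, c, rfl, hab, hbc, by grind⟩
  · rintro ⟨a, b, c, rfl, hab, hbc, hac⟩
    have hchain : List.IsChain G.Adj [a, b, c] := by simp [hab, hbc]
    exact ⟨rfl, by simp [hab.ne, hbc.ne, hac], hchain⟩

theorem isKCover_three_iff :
    IsKCover G 3 C ↔
      ∀ ⦃u v w⦄, G.Adj u v → G.Adj v w → u ≠ w → u ∈ C ∨ v ∈ C ∨ w ∈ C := by
  constructor
  · intro hC u v w huv hvw huw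
    simpa using hC [u, v, w] (isKPath_three_iff.2 ⟨u, v, w, rfl, huv, hvw, huw⟩)
  · intro hC l hl
    obtain ⟨a, b, c, rfl, hab, hbc, hac⟩ := isKPath_three_iff.1 hl
    simpa using hC hab hbc hac

theorem isKCover_three_compl_iff [Fintype V] [DecidableEq V] :
    IsKCover G 3 Sᶜ ↔ IsDissocSet G S := by
  simp only [isKCover_three_iff, IsDissocSet, Finset.mem_compl]
  constructor
  · intro h v hv u hu w hw hvu hvw
    by_contra huw
    have := h hvu.symm hvw huw
    tauto
  · intro h u v w huv hvw huw
    by_contra! hmem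
    exact huw (h v hmem.2.1 u hmem.1 w hmem.2.2 huv.symm hvw)

theorem finite_setOf_isKPath [Finite V] (G : SimpleGraph V) (k : ℕ) :
    {l | IsKPath G k l}.Finite :=
  (List.finite_length_eq V k).subset fun _ hl => hl.1

theorem IsKMatching.card_mul_le_card [Fintype V] (hM : IsKMatching G k M) :
    M.card * k ≤ Fintype.card V := by
  classical
  calc M.card * k = ∑ l ∈ M, l.toFinset.card := by
        rw [Finset.sum_const_nat fun l hl => ?_]
        rw [List.toFinset_card_of_nodup (hM.1 l hl).2.1, (hM.1 l hl).1]
    _ = (M.biUnion List.toFinset).card := by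
        refine (Finset.card_biUnion fun l hl l' hl' hne => ?_).symm
        simpa [Finset.disjoint_left] using hM.2 hl hl' hne
    _ ≤ Fintype.card V := Finset.card_le_univ _

theorem bddAbove_setOf_isKMatching_card [Finite V] (G : SimpleGraph V) (hk : k ≠ 0) :
    BddAbove {n | ∃ M, IsKMatching G k M ∧ M.card = n} := by
  have := Fintype.ofFinite V
  refine ⟨Fintype.card V, ?_⟩
  rintro _ ⟨M, hM, rfl⟩
  exact (Nat.le_mul_of_pos_right _ (Nat.pos_of_ne_zero hk)).trans hM.card_mul_le_card

theorem IsKMatching.card_le_kMatchNum [Finite V] (hM : IsKMatching G k M) (hk : k ≠ 0) :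
    M.card ≤ kMatchNum G k :=
  le_csSup (bddAbove_setOf_isKMatching_card G hk) ⟨M, hM, rfl⟩

theorem exists_isMaxKMatching [Finite V] (G : SimpleGraph V) (hk : k ≠ 0) :
    ∃ M, IsMaxKMatching G k M :=
  Nat.sSup_mem (s := {n | ∃ M, IsKMatching G k M ∧ M.card = n})
    ⟨0, ∅, by simp [IsKMatching], rfl⟩ (bddAbove_setOf_isKMatching_card G hk)

theorem kMatchNum_mul_le_card [Fintype V] (G : SimpleGraph V) (hk : k ≠ 0) :
    kMatchNum G k * k ≤ Fintype.card V := by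
  obtain ⟨M, hM, hcard⟩ := exists_isMaxKMatching G hk
  exact hcard ▸ hM.card_mul_le_card

theorem IsKCover.kCoverNum_le_card (hC : IsKCover G k C) : kCoverNum G k ≤ C.card :=
  Nat.sInf_le ⟨C, hC, rfl⟩

theorem exists_isKCover_card_eq_kCoverNum [Finite V] (G : SimpleGraph V) (hk : k ≠ 0) :
    ∃ C, IsKCover G k C ∧ C.card = kCoverNum G k := by
  have := Fintype.ofFinite V
  refine Nat.sInf_mem (s := {n | ∃ C, IsKCover G k C ∧ C.card = n})
    ⟨_, Finset.univ, fun l hl => ?_, rfl⟩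
  obtain ⟨v, hv⟩ := List.exists_mem_of_ne_nil l (hl.ne_nil hk)
  exact ⟨v, hv, Finset.mem_univ v⟩

theorem IsDissocSet.card_le_dissNum [Finite V] (hS : IsDissocSet G S) : S.card ≤ dissNum G := by
  have := Fintype.ofFinite V
  refine le_csSup ⟨Fintype.card V, ?_⟩ ⟨S, hS, rfl⟩
  rintro _ ⟨S, -, rfl⟩
  exact S.card_le_univ

theorem IsMaxDissocSet.card_compl_le_kCoverNum [Fintype V] [DecidableEq V]
    (hS : IsMaxDissocSet G S) : Sᶜ.card ≤ kCoverNum G 3 := by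
  obtain ⟨C, hC, hcard⟩ := exists_isKCover_card_eq_kCoverNum G three_ne_zero
  have hCS : Cᶜ.card ≤ S.card := by
    rw [hS.2]
    exact (isKCover_three_compl_iff.1 (by rwa [compl_compl])).card_le_dissNum
  have := C.card_add_card_compl
  have := S.card_add_card_compl
  omega

theorem kCoverNum_le_kMatchNum_of_isAcyclic [Finite V] (hG : G.IsAcyclic) (hk : k ≠ 0) :
    kCoverNum G k ≤ kMatchNum G k := by
  classical
  obtain hV | hV := isEmpty_or_nonempty V
  · have hC : IsKCover G k ∅ := fun l hl => absurd (Subsingleton.elim l []) (hl.ne_nil hk)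
    exact hC.kCoverNum_le_card.trans (Nat.zero_le _)
  obtain ⟨T, hGT, -, hT⟩ := connected_top.exists_isTree_le_of_le_of_isAcyclic le_top hG
  have r := Classical.arbitrary V
  have hchain {l : List V} (hl : IsKPath G k l) : l.IsChain T.Adj := hl.2.2.imp hGT
  have htop (l : List V) : IsKPath G k l → ∃ t ∈ l, ∀ v ∈ l, Dominates T r t v := fun hl =>
    exists_mem_forall_dominates hT.isAcyclic r (hchain hl) (hl.ne_nil hk)
  choose! top htop_mem htop_dom using htop
  let paths := (finite_setOf_isKPath G k).toFinset
  have hpaths {l : List V} : l ∈ paths ↔ IsKPath G k l := Set.Finite.mem_toFinset _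
  obtain ⟨M, hMsub, C, hdisj, hC, hcard⟩ := exists_pairwiseDisjoint_forall_exists_mem
    (fun l : List V => {v | v ∈ l}) top (fun l => T.dist r (top l)) paths
    (fun l hl => ⟨top l, htop_mem l (hpaths.1 hl)⟩)
    (fun l hl l' hl' hd hmeet => by
      obtain ⟨u, hu, hu'⟩ := Set.not_disjoint_iff.1 hmeet
      exact mem_of_dominates_of_dist_le hT.connected.preconnected (hchain (hpaths.1 hl))
        (htop_mem l (hpaths.1 hl)) (htop_dom l' (hpaths.1 hl')) hd hu hu')
  have hM : IsKMatching G k M := ⟨fun l hl => hpaths.1 (hMsub hl),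
    fun l hl l' hl' hne v hv => Set.disjoint_left.1 (hdisj hl hl' hne) hv⟩
  have hC : IsKCover G k C := fun l hl => hC l (hpaths.2 hl)
  exact hC.kCoverNum_le_card.trans (hcard.trans (hM.card_le_kMatchNum hk))

theorem IsKMatching.isTransversal [DecidableEq V] (hM : IsKMatching G k M) (hC : IsKCover G k C)
    (hcard : C.card ≤ M.card) : IsTransversal (fun l : M => l.1.toFinset) C := by
  choose g hgmem hgC using fun l : M => hC l (hM.1 l l.2)
  have hg {l l' : M} {v : V} (hl : v ∈ l.1) (hl' : v ∈ l'.1) : l = l' := by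
    by_contra hne
    exact hM.2 l.2 l'.2 (Subtype.coe_ne_coe.2 hne) v hl hl'
  have hinj : Function.Injective g := fun l l' h => hg (hgmem l) (h ▸ hgmem l')
  have himage : Finset.univ.image g = C := by
    refine Finset.eq_of_subset_of_card_le (Finset.image_subset_iff.2 fun l _ => hgC l) ?_
    simpa [Finset.card_image_of_injective _ hinj] using hcard
  have hsurj : ∀ v ∈ C, ∃ l, g l = v := by simp [← himage]
  refine ⟨fun v hv => ?_, fun l => ⟨g l, ⟨hgC l, List.mem_toFinset.2 (hgmem l)⟩, ?_⟩⟩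
  · obtain ⟨l, rfl⟩ := hsurj v hv
    exact ⟨l, List.mem_toFinset.2 (hgmem l)⟩
  · rintro v ⟨hv, hvl⟩
    obtain ⟨l', rfl⟩ := hsurj v hv
    rw [hg (hgmem l') (List.mem_toFinset.1 hvl)]

end KPath

section TransversalCovers

variable {V : Type*} {G : SimpleGraph V} {k : ℕ} {l l' : List V}
  {M : Finset (List V)} {𝒞 : Finset (Finset V)} {C : Finset V} {u v w x y z : V}

theorem exists_adj_of_mem_of_notMem (hG : G.Preconnected) {S : Set V} (hu : u ∈ S) (hv : v ∉ S) :
    ∃ a ∈ S, ∃ b ∉ S, G.Adj a b := by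
  obtain ⟨p⟩ := hG u v
  obtain ⟨d, -, hfst, hsnd⟩ := p.exists_boundary_dart S hu hv
  exact ⟨d.fst, hfst, d.snd, hsnd, d.adj⟩

theorem exists_forall_mem_of_adj (hG : G.Preconnected) (huv : G.Adj u v) (hzu : z ≠ u)
    (hzv : z ≠ v) : ∃ w, ∀ C, IsKCover G 3 C → u ∉ C → v ∉ C → w ∈ C := by
  obtain ⟨a, ha, w, hw, haw⟩ := exists_adj_of_mem_of_notMem hG (S := {u, v}) (u := u) (v := z)
    (by simp) (by simp [hzu, hzv])
  refine ⟨w, fun C hC hu hv => ?_⟩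
  rw [isKCover_three_iff] at hC
  obtain rfl | rfl := ha <;> grind [SimpleGraph.adj_comm]

theorem IsKPath.center_or_end (hl : IsKPath G 3 l) (hv : v ∈ l) :
    (∃ a ∈ l, ∃ c ∈ l, G.Adj v a ∧ G.Adj v c ∧ a ≠ c) ∨
      ∃ b ∈ l, ∃ c ∈ l, G.Adj v b ∧ G.Adj b c ∧ v ≠ c ∧ ∀ u ∈ l, u = v ∨ u = b ∨ u = c := by
  obtain ⟨a, b, c, rfl, hab, hbc, hac⟩ := isKPath_three_iff.1 hl
  obtain rfl | rfl | rfl : v = a ∨ v = b ∨ v = c := by simpa using hv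
  · exact .inr ⟨b, by simp, c, by simp, hab, hbc, hac, by simp⟩
  · exact .inl ⟨a, by simp, c, by simp, hab.symm, hbc, hac⟩
  · exact .inr ⟨b, by simp, a, by simp, hbc.symm, hab.symm, hac.symm, by simp⟩

theorem IsKPath.exists_mem_forall_notMem (hl : IsKPath G 3 l) (hv : v ∈ l) (hy : y ∉ l)
    (hyv : G.Adj y v) :
    ∃ q ∈ l, ∀ C, IsKCover G 3 C → (∃! a, a ∈ C ∧ a ∈ l) → y ∉ C → q ∉ C := by
  obtain ⟨b, hb, q, hq, hvb, hqv, hqb⟩ : ∃ b ∈ l, ∃ q ∈ l, G.Adj v b ∧ q ≠ v ∧ q ≠ b := by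
    obtain ⟨a, ha, c, hc, hva, hvc, hac⟩ | ⟨b, hb, c, hc, hvb, hbc, hvc, -⟩ := hl.center_or_end hv
    · exact ⟨a, ha, c, hc, hva, hvc.ne', hac.symm⟩
    · exact ⟨b, hb, c, hc, hvb, hvc.symm, hbc.ne'⟩
  refine ⟨q, hq, fun C hC hunique hyC hqC => ?_⟩
  have hcover := isKCover_three_iff.1 hC hyv hvb (ne_of_mem_of_not_mem hb hy).symm
  obtain hvC | hbC := hcover.resolve_left hyC
  · exact hqv (hunique.unique ⟨hqC, hq⟩ ⟨hvC, hv⟩)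
  · exact hqb (hunique.unique ⟨hqC, hq⟩ ⟨hbC, hb⟩)

theorem IsKPath.exists_mem_forall_mem_or_mem_and_mem (hl : IsKPath G 3 l) (hv : v ∈ l)
    (hx : x ∉ l) (hxv : G.Adj x v) (hu : u = x ∨ u ∈ l) (hwx : w ≠ x) (hw : w ∉ l)
    (huw : G.Adj u w) :
    ∃ s ∈ l, ∃ t ∈ l, ∀ C, IsKCover G 3 C → (∃! a, a ∈ C ∧ a ∈ l) → x ∉ C →
      s ∈ C ∨ t ∈ C ∧ w ∈ C := by
  obtain ⟨a, ha, c, hc, hva, hvc, hac⟩ | ⟨b, hb, c, hc, hvb, hbc, hvc, hcases⟩ :=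
    hl.center_or_end hv
  · refine ⟨v, hv, v, hv, fun C hC hunique hxC => .inl ?_⟩
    rw [isKCover_three_iff] at hC
    by_contra hvC
    have haC : a ∈ C := by grind
    have hcC : c ∈ C := by grind
    exact hac (hunique.unique ⟨haC, ha⟩ ⟨hcC, hc⟩)
  have hmem : ∀ C, IsKCover G 3 C → (∃! a, a ∈ C ∧ a ∈ l) → x ∉ C →
      c ∉ C ∧ (v ∈ C ∧ b ∉ C ∨ v ∉ C ∧ b ∈ C) := by
    intro C hC hunique hxC
    have := isKCover_three_iff.1 hC hxv hvb (ne_of_mem_of_not_mem hb hx).symm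
    have := hvb.ne
    have := hbc.ne
    grind [ExistsUnique]
  obtain hu | hu : (u = x ∨ u = v) ∨ (u = b ∨ u = c) := by grind
  · refine ⟨v, hv, b, hb, fun C hC hunique hxC => ?_⟩
    have := hmem C hC hunique hxC
    rw [isKCover_three_iff] at hC
    obtain rfl | rfl := hu
    · grind [hC hxv.symm huw (ne_of_mem_of_not_mem hv hw)]
    · grind [hC hxv huw hwx.symm]
  · refine ⟨b, hb, v, hv, fun C hC hunique hxC => ?_⟩
    have := hmem C hC hunique hxC
    rw [isKCover_three_iff] at hC
    obtain rfl | rfl := hu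
    · grind [hC hbc.symm huw (ne_of_mem_of_not_mem hc hw)]
    · grind [hC hbc huw (ne_of_mem_of_not_mem hb hw)]

variable [DecidableEq V]

theorem IsKMatching.card_toFinset_le (hM : IsKMatching G k M) (l : M) : l.1.toFinset.card ≤ k :=
  (List.toFinset_card_le _).trans_eq (hM.1 l l.2).1

theorem IsTransversal.notMem_of_forall_notMem
    (hC : IsTransversal (fun l : M => l.1.toFinset) C) (hx : ∀ l ∈ M, x ∉ l) : x ∉ C := fun hxC =>
  have ⟨l, hl⟩ := hC.1 x hxC
  hx l l.2 (List.mem_toFinset.1 hl)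

theorem IsTransversal.existsUnique_mem (hC : IsTransversal (fun l : M => l.1.toFinset) C)
    (hl : l ∈ M) : ∃! a, a ∈ C ∧ a ∈ l := by
  simpa using hC.2 ⟨l, hl⟩

theorem card_le_three_pow_of_adj (hG : G.Preconnected) (hM : IsKMatching G 3 M)
    (h𝒞 : ∀ C ∈ 𝒞, IsTransversal (fun l : M => l.1.toFinset) C)
    (hcover : ∀ C ∈ 𝒞, IsKCover G 3 C) (hx : ∀ l ∈ M, x ∉ l) (hy : ∀ l ∈ M, y ∉ l)
    (hxy : G.Adj x y) : 𝒞.card ≤ 3 ^ (M.card - 1) := by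
  obtain rfl | ⟨l, hl⟩ := M.eq_empty_or_nonempty
  · simpa using card_le_prod_card (B := fun _ => ∅) h𝒞 (by simp)
  obtain ⟨z, hz⟩ := List.exists_mem_of_ne_nil l ((hM.1 l hl).ne_nil three_ne_zero)
  obtain ⟨w, hw⟩ := exists_forall_mem_of_adj hG hxy (ne_of_mem_of_not_mem hz (hx l hl))
    (ne_of_mem_of_not_mem hz (hy l hl))
  simpa using card_le_pow_of_forall_mem h𝒞 hM.card_toFinset_le fun C hC =>
    hw C (hcover C hC) ((h𝒞 C hC).notMem_of_forall_notMem hx)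
      ((h𝒞 C hC).notMem_of_forall_notMem hy)

theorem card_le_three_pow_of_adj_mem_of_adj_mem (hM : IsKMatching G 3 M)
    (h𝒞 : ∀ C ∈ 𝒞, IsTransversal (fun l : M => l.1.toFinset) C)
    (hcover : ∀ C ∈ 𝒞, IsKCover G 3 C) (hx : ∀ l ∈ M, x ∉ l) (hy : ∀ l ∈ M, y ∉ l)
    (hxy : x ≠ y) (hl : l ∈ M) (hv : v ∈ l) (hxv : G.Adj x v) (hw : w ∈ l) (hyw : G.Adj y w) :
    𝒞.card ≤ 3 ^ (M.card - 1) := by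
  obtain ⟨s, -, t, -, hst⟩ := (hM.1 l hl).exists_mem_forall_mem_or_mem_and_mem hv (hx l hl) hxv
    (.inr hw) hxy.symm (hy l hl) hyw.symm
  simpa using card_le_pow_of_forall_mem h𝒞 hM.card_toFinset_le fun C hC =>
    (hst C (hcover C hC) ((h𝒞 C hC).existsUnique_mem hl)
      ((h𝒞 C hC).notMem_of_forall_notMem hx)).resolve_right
        fun h => (h𝒞 C hC).notMem_of_forall_notMem hy h.2

theorem card_le_three_pow_of_adj_mem_of_adj_mem_of_ne (hG : G.Preconnected) (hM : IsKMatching G 3 M)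
    (h𝒞 : ∀ C ∈ 𝒞, IsTransversal (fun l : M => l.1.toFinset) C)
    (hcover : ∀ C ∈ 𝒞, IsKCover G 3 C) (hx : ∀ l ∈ M, x ∉ l) (hy : ∀ l ∈ M, y ∉ l)
    (hxy : x ≠ y) (hl : l ∈ M) (hl' : l' ∈ M) (hll' : l ≠ l') (hv : v ∈ l) (hxv : G.Adj x v)
    (hw : w ∈ l') (hyw : G.Adj y w) : 𝒞.card ≤ 3 ^ (M.card - 1) := by
  obtain ⟨a, ha, b, hb, hab⟩ := exists_adj_of_mem_of_notMem hG (S := {z | z = x ∨ z ∈ l})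
    (u := x) (v := y) (.inl rfl) (not_or.2 ⟨hxy.symm, hy l hl⟩)
  obtain ⟨hbx, hbl⟩ := not_or.1 hb
  obtain ⟨s, hs, t, ht, hst⟩ := (hM.1 l hl).exists_mem_forall_mem_or_mem_and_mem hv (hx l hl) hxv
    ha hbx hbl hab
  obtain ⟨q, hq, hqC⟩ := (hM.1 l' hl').exists_mem_forall_notMem hw (hy l' hl') hyw
  have h := card_le_pow_of_forall_mem_or_mem_and_mem (i := ⟨l, hl⟩) (l := ⟨l', hl'⟩) h𝒞
    hM.card_toFinset_le (by simpa using hll') (List.mem_toFinset.2 hs) (List.mem_toFinset.2 ht)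
    (mt List.mem_toFinset.1 hbl) (List.mem_toFinset.2 hq)
    (fun C hC => hst C (hcover C hC) ((h𝒞 C hC).existsUnique_mem hl)
      ((h𝒞 C hC).notMem_of_forall_notMem hx))
    (fun C hC => hqC C (hcover C hC) ((h𝒞 C hC).existsUnique_mem hl')
      ((h𝒞 C hC).notMem_of_forall_notMem hy))
  simpa using h

theorem card_le_three_pow_of_preconnected (hG : G.Preconnected) (hM : IsKMatching G 3 M)
    (h𝒞 : ∀ C ∈ 𝒞, IsTransversal (fun l : M => l.1.toFinset) C)
    (hcover : ∀ C ∈ 𝒞, IsKCover G 3 C) (hx : ∀ l ∈ M, x ∉ l) (hy : ∀ l ∈ M, y ∉ l)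
    (hxy : x ≠ y) : 𝒞.card ≤ 3 ^ (M.card - 1) := by
  by_cases hedge : ∃ u v, G.Adj u v ∧ (∀ l ∈ M, u ∉ l) ∧ ∀ l ∈ M, v ∉ l
  · obtain ⟨u, v, huv, hu, hv⟩ := hedge
    exact card_le_three_pow_of_adj hG hM h𝒞 hcover hu hv huv
  push Not at hedge
  have : Nontrivial V := ⟨x, y, hxy⟩
  obtain ⟨v, hxv⟩ := hG.exists_adj_of_nontrivial x
  obtain ⟨w, hyw⟩ := hG.exists_adj_of_nontrivial y
  obtain ⟨l, hl, hvl⟩ := hedge x v hxv hx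
  obtain ⟨l', hl', hwl'⟩ := hedge y w hyw hy
  obtain rfl | hll' := eq_or_ne l l'
  · exact card_le_three_pow_of_adj_mem_of_adj_mem hM h𝒞 hcover hx hy hxy hl hvl hxv hwl' hyw
  · exact card_le_three_pow_of_adj_mem_of_adj_mem_of_ne hG hM h𝒞 hcover hx hy hxy hl hl' hll' hvl
      hxv hwl' hyw

end TransversalCovers

section MaxDissocSets

variable {V : Type*} [Fintype V] {G : SimpleGraph V} {k : ℕ} {M : Finset (List V)}

theorem IsKMatching.exists_ne_notMem (hM : IsKMatching G k M)
    (hcard : M.card * k + 2 ≤ Fintype.card V) :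
    ∃ x y, x ≠ y ∧ (∀ l ∈ M, x ∉ l) ∧ ∀ l ∈ M, y ∉ l := by
  classical
  let U := M.biUnion List.toFinset
  have hU : U.card ≤ M.card * k := Finset.card_biUnion_le_card_mul _ _ _ fun l hl =>
    hM.card_toFinset_le ⟨l, hl⟩
  have hUcompl : 1 < Uᶜ.card := by
    rw [Finset.card_compl]
    omega
  obtain ⟨x, hx, y, hy, hxy⟩ := Finset.one_lt_card.1 hUcompl
  exact ⟨x, y, hxy, by simpa [U] using hx, by simpa [U] using hy⟩

theorem tree_numMaxDissoc_le_of_card_eq_three_mul_add_two_general (hG : G.Preconnected)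
    (hτ : kCoverNum G 3 ≤ kMatchNum G 3) (hcard : 3 * kMatchNum G 3 + 2 ≤ Fintype.card V) :
    {S : Finset V | IsMaxDissocSet G S}.ncard ≤ 3 ^ (kMatchNum G 3 - 1) := by
  classical
  obtain ⟨M, hM, hMcard⟩ := exists_isMaxKMatching G three_ne_zero
  obtain ⟨x, y, hxy, hx, hy⟩ := hM.exists_ne_notMem (by omega)
  let 𝒞 := Finset.univ.filter fun C => IsKCover G 3 C ∧ C.card ≤ M.card
  have hcompl : ∀ S ∈ {S | IsMaxDissocSet G S}, Sᶜ ∈ (𝒞 : Set (Finset V)) := fun S hS => by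
    simpa [𝒞] using ⟨isKCover_three_compl_iff.2 hS.1,
      hS.card_compl_le_kCoverNum.trans (hτ.trans_eq hMcard.symm)⟩
  have h𝒞 : ∀ C ∈ 𝒞, IsKCover G 3 C ∧ C.card ≤ M.card := by simp [𝒞]
  calc {S : Finset V | IsMaxDissocSet G S}.ncard ≤ (𝒞 : Set (Finset V)).ncard :=
        Set.ncard_le_ncard_of_injOn _ hcompl compl_injective.injOn
    _ = 𝒞.card := Set.ncard_coe_finset 𝒞
    _ ≤ 3 ^ (M.card - 1) := card_le_three_pow_of_preconnected hG hM
        (fun C hC => hM.isTransversal (h𝒞 C hC).1 (h𝒞 C hC).2) (fun C hC => (h𝒞 C hC).1) hx hy hxy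
    _ = 3 ^ (kMatchNum G 3 - 1) := by rw [hMcard]

end MaxDissocSets

/-- A tree on `3m + 2` vertices (`m ≥ 1`) has at most `3^(m-1)` maximum dissociation
sets. -/
theorem tree_numMaxDissoc_le_of_card_eq_three_mul_add_two {V : Type*} [Fintype V]
    [DecidableEq V] (T : SimpleGraph V) (hT : T.IsTree) (m : ℕ) (hm : 1 ≤ m)
    (hcard : Fintype.card V = 3 * m + 2) :
    {S : Finset V | IsMaxDissocSet T S}.ncard ≤ 3 ^ (m - 1) := by
  have hμ : kMatchNum T 3 * 3 ≤ Fintype.card V := kMatchNum_mul_le_card T three_ne_zero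
  have hτ : kCoverNum T 3 ≤ kMatchNum T 3 :=
    kCoverNum_le_kMatchNum_of_isAcyclic hT.isAcyclic three_ne_zero
  calc {S : Finset V | IsMaxDissocSet T S}.ncard ≤ 3 ^ (kMatchNum T 3 - 1) :=
        tree_numMaxDissoc_le_of_card_eq_three_mul_add_two_general
          hT.connected.preconnected hτ (by omega)
    _ ≤ 3 ^ (m - 1) := Nat.pow_le_pow_right three_pos (by omega)
end

section
/- Let m be a positive integer and T a tree on 3m vertices. Then the number of maximum dissociation sets of T is at most 3^{m−1} + m + 1. -/
open SimpleGraph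

/-!
Root the tree and repeatedly remove a deepest subtree that is not a dissociation set. Every
dissociation set omits a vertex of each removed piece, while keeping all but the root of each piece
is possible, so after `k` removals the maximum dissociation sets are those that omit exactly one
vertex of each of the `k` pieces and nothing else. The omitted vertex lies in any prescribed `P₃` of
its piece, which gives at most `3 ^ k` sets; since pieces have at least three vertices, `k ≤ m`, and
this suffices unless `k = m`.

If `k = m`, then the pieces are `m` copies of `P₃` covering the tree. Put them back one at a time,
each attached to the previous part `W` by a single edge `pq` with `p ∈ W`. The sets omitting `q`
contribute at most as many as `W` has. Of the two other choices for the omitted vertex of the piece,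
at least one keeps a neighbour of `q`, which forces `p` to be omitted, and the other leaves `p`
without a neighbour in `W`. So the count is not tripled: it only grows by the number of sets of `W`
omitting `p` plus the number of those in which `p` has no neighbour, and these numbers obey similar
recursions.
-/

noncomputable section

open Finset

variable {V : Type*} {G : SimpleGraph V} {W D E X Y : Finset V} {b p q r t u v w : V} {k : ℕ}

theorem IsDissocSet.mono (hY : IsDissocSet G Y) (hXY : X ⊆ Y) : IsDissocSet G X :=
  fun v hv u hu w hw ↦ hY v (hXY hv) u (hXY hu) w (hXY hw)

theorem IsDissocSet.union [DecidableEq V] (hX : IsDissocSet G X) (hY : IsDissocSet G Y)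
    (hXY : ∀ x ∈ X, ∀ y ∈ Y, ¬G.Adj x y) : IsDissocSet G (X ∪ Y) := by
  intro v hv u hu w hw hvu hvw
  have hYX : ∀ y ∈ Y, ∀ x ∈ X, ¬G.Adj y x := fun y hy x hx h ↦ hXY x hx y hy h.symm
  simp only [mem_union] at hv hu hw
  have hX' := hX v
  have hY' := hY v
  grind

open Classical in
/-- The dissociation sets contained in `W` that omit exactly `k` vertices of `W`. Counting omitted
vertices rather than chosen ones makes the index additive over disjoint unions. -/
def dissocSets (G : SimpleGraph V) (k : ℕ) (W : Finset V) : Finset (Finset V) :=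
  {X ∈ W.powerset | IsDissocSet G X ∧ #X + k = #W}

theorem mem_dissocSets :
    X ∈ dissocSets G k W ↔ X ⊆ W ∧ IsDissocSet G X ∧ #X + k = #W := by
  simp [dissocSets]

theorem dissocSets_zero_empty : dissocSets G 0 ∅ = {∅} := by
  ext X
  simp +contextual [mem_dissocSets, IsDissocSet]

/-- A cherry: the vertex set of a not necessarily induced path on three vertices, with `b` its
middle vertex. -/
structure IsCherry (G : SimpleGraph V) (b : V) (D : Finset V) : Prop where
  mem : b ∈ D
  card_eq : #D = 3
  adj : ∀ v ∈ D, v ≠ b → G.Adj b v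

theorem exists_isCherry_subset (hD : ¬IsDissocSet G D) : ∃ b, ∃ Q ⊆ D, IsCherry G b Q := by
  classical
  simp only [IsDissocSet, not_forall] at hD
  obtain ⟨b, hb, u, hu, w, hw, hbu, hbw, huw⟩ := hD
  refine ⟨b, {b, u, w}, by grind, by simp, ?_, by grind⟩
  exact card_eq_three.2 ⟨b, u, w, hbu.ne, hbw.ne, huw, rfl⟩

theorem IsCherry.not_isDissocSet (hD : IsCherry G b D) : ¬IsDissocSet G D := by
  classical
  intro h
  obtain ⟨u, w, huw, hD'⟩ := card_eq_two.1 (by rw [card_erase_of_mem hD.mem, hD.card_eq] :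
    #(D.erase b) = 2)
  have hu : u ∈ D.erase b := by simp [hD']
  have hw : w ∈ D.erase b := by simp [hD']
  rw [mem_erase] at hu hw
  exact huw (h b hD.mem u hu.2 w hw.2 (hD.adj u hu.2 hu.1) (hD.adj w hw.2 hw.1))

theorem IsCherry.exists_adj_ne (hD : IsCherry G b D) (hq : q ∈ D) (hv : v ≠ b) :
    ∃ u ∈ D, u ≠ v ∧ G.Adj q u := by
  classical
  obtain rfl | hqb := eq_or_ne q b
  · obtain ⟨u, hu, huv⟩ : ∃ u ∈ D, u ∉ ({q, v} : Finset V) :=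
      exists_mem_notMem_of_card_lt_card (card_le_two.trans_lt (by simp [hD.card_eq]))
    simp only [mem_insert, mem_singleton, not_or] at huv
    exact ⟨u, hu, huv.2, hD.adj u hu huv.1⟩
  · exact ⟨b, hD.mem, hv.symm, (hD.adj q hq hqb).symm⟩

theorem IsCherry.exists_eq_insert_and_adj [DecidableEq V] (hD : IsCherry G b D) (hq : q ∈ D) :
    ∃ e f, D = {q, e, f} ∧ G.Adj q f := by
  obtain ⟨e, he, heqb⟩ : ∃ e ∈ D, e ∉ ({q, b} : Finset V) :=
    exists_mem_notMem_of_card_lt_card (card_le_two.trans_lt (by simp [hD.card_eq]))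
  simp only [mem_insert, mem_singleton, not_or] at heqb
  obtain ⟨f, hf, hfe, hqf⟩ := hD.exists_adj_ne hq heqb.2
  refine ⟨e, f, (eq_of_subset_of_card_le (by simp [insert_subset_iff, hq, he, hf]) ?_).symm, hqf⟩
  rw [hD.card_eq, card_eq_three.2 ⟨q, e, f, Ne.symm heqb.1, hqf.ne, hfe.symm, rfl⟩]

/-! ### Splitting off a piece that is not a dissociation set -/

section Split

variable [DecidableEq V] (hWD : Disjoint W D) (hW : ∀ X ⊆ W, IsDissocSet G X → #X + k ≤ #W)

include hWD in
theorem card_eq_card_inter_add_card_inter (hX : X ⊆ W ∪ D) : #X = #(X ∩ W) + #(X ∩ D) := by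
  rw [← card_union_of_disjoint (hWD.mono inter_subset_right inter_subset_right),
    ← inter_union_distrib_left, inter_eq_left.2 hX]

theorem IsDissocSet.card_inter_lt (hX : IsDissocSet G X) (hD : ¬IsDissocSet G D) :
    #(X ∩ D) < #D := by
  refine card_lt_card (inter_subset_right.ssubset_of_ne fun h ↦ hD ?_)
  exact hX.mono (inter_eq_right.1 h)

include hWD hW in
theorem inter_mem_dissocSets (hD : ¬IsDissocSet G D) (hX : X ∈ dissocSets G (k + 1) (W ∪ D)) :
    X ∩ W ∈ dissocSets G k W := by
  obtain ⟨hXWD, hXdis, hXcard⟩ := mem_dissocSets.1 hX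
  have hsplit := card_eq_card_inter_add_card_inter hWD hXWD
  have hunion := card_union_of_disjoint hWD
  have hXW := hW _ inter_subset_right (hXdis.mono inter_subset_left)
  have hXD := hXdis.card_inter_lt hD
  exact mem_dissocSets.2 ⟨inter_subset_right, hXdis.mono inter_subset_left, by omega⟩

include hWD hW in
theorem exists_forall_notMem_iff_eq (hD : ¬IsDissocSet G D)
    (hX : X ∈ dissocSets G (k + 1) (W ∪ D)) : ∃ d ∈ D, ∀ x ∈ D, x ∉ X ↔ x = d := by
  obtain ⟨hXWD, -, hXcard⟩ := mem_dissocSets.1 hX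
  have hsplit := card_eq_card_inter_add_card_inter hWD hXWD
  have hunion := card_union_of_disjoint hWD
  have hXW := (mem_dissocSets.1 (inter_mem_dissocSets hWD hW hD hX)).2.2
  obtain ⟨d, hd⟩ := card_eq_one.1 (by rw [card_sdiff]; omega : #(D \ X) = 1)
  have hmem : ∀ x, x ∈ D ∧ x ∉ X ↔ x = d := by simpa [Finset.ext_iff] using hd
  exact ⟨d, ((hmem d).2 rfl).1, fun x hx ↦ by simp [← hmem, hx]⟩

include hWD hW in
/-- A set in `dissocSets G (k + 1) (W ∪ D)` omits a single vertex of `D`, so it is determined by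
that vertex together with its trace on `W`. -/
theorem card_le_sum_of_exists_notMem (hD : ¬IsDissocSet G D) {ι : Type*} {s : Finset ι}
    {d : ι → V} (hd : ∀ i ∈ s, d i ∈ D) {𝒜 : Finset (Finset V)} {ℬ : ι → Finset (Finset V)}
    (h𝒜 : 𝒜 ⊆ dissocSets G (k + 1) (W ∪ D))
    (h : ∀ X ∈ 𝒜, ∃ i ∈ s, d i ∉ X ∧ X ∩ W ∈ ℬ i) : #𝒜 ≤ ∑ i ∈ s, #(ℬ i) := by
  have hsub : 𝒜 ⊆ s.biUnion fun i ↦ (ℬ i).image (· ∪ D.erase (d i)) := by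
    intro X hX
    obtain ⟨i, hi, hiX, hXi⟩ := h X hX
    obtain ⟨e, -, he⟩ := exists_forall_notMem_iff_eq hWD hW hD (h𝒜 hX)
    have hie : d i = e := (he _ (hd i hi)).1 hiX
    have hXWD := (mem_dissocSets.1 (h𝒜 hX)).1
    refine mem_biUnion.2 ⟨i, hi, mem_image.2 ⟨X ∩ W, hXi, ?_⟩⟩
    ext x
    have hx := @hXWD x
    have hxe := he x
    simp only [mem_union, mem_inter, mem_erase, hie] at hx ⊢
    tauto
  exact (card_le_card hsub).trans <| card_biUnion_le.trans <| sum_le_sum fun i _ ↦ card_image_le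

include hWD hW in
theorem card_le_card_mul_of_exists_notMem (hD : ¬IsDissocSet G D) (hE : E ⊆ D)
    {𝒜 ℬ : Finset (Finset V)} (h𝒜 : 𝒜 ⊆ dissocSets G (k + 1) (W ∪ D))
    (hℬ : ∀ X ∈ 𝒜, X ∩ W ∈ ℬ) (h : ∀ X ∈ 𝒜, ∃ e ∈ E, e ∉ X) : #𝒜 ≤ #E * #ℬ := by
  rw [← smul_eq_mul, ← sum_const]
  refine card_le_sum_of_exists_notMem hWD hW hD (d := id) (fun e he ↦ hE he) h𝒜 fun X hX ↦ ?_
  obtain ⟨e, he, heX⟩ := h X hX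
  exact ⟨e, he, heX, hℬ X hX⟩

include hWD hW in
theorem card_le_of_forall_notMem (hD : ¬IsDissocSet G D) (hw : w ∈ D) {𝒜 ℬ : Finset (Finset V)}
    (h𝒜 : 𝒜 ⊆ dissocSets G (k + 1) (W ∪ D)) (hℬ : ∀ X ∈ 𝒜, X ∩ W ∈ ℬ) (h : ∀ X ∈ 𝒜, w ∉ X) :
    #𝒜 ≤ #ℬ := by
  simpa using card_le_card_mul_of_exists_notMem hWD hW hD (singleton_subset_iff.2 hw) h𝒜 hℬ
    fun X hX ↦ ⟨w, mem_singleton_self w, h X hX⟩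

end Split

/-! ### Peeling off pendant pieces -/

/-- `pq` is the only edge between the disjoint vertex sets `W ∋ p` and `D ∋ q`. -/
structure IsJoinedByEdge (G : SimpleGraph V) (W D : Finset V) (p q : V) : Prop where
  disjoint : Disjoint W D
  left_mem : p ∈ W
  right_mem : q ∈ D
  adj : G.Adj p q
  unique : ∀ x ∈ W, ∀ y ∈ D, G.Adj x y → x = p ∧ y = q

/-- `D` is a pendant piece over `W` with root `t`: it is not a dissociation set but becomes one when
`t` is deleted, and it hangs on `W` by a single edge at `t` unless `W` is empty. -/
structure IsPendant [DecidableEq V] (G : SimpleGraph V) (W D : Finset V) (t : V) : Prop where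
  mem : t ∈ D
  not_isDissocSet : ¬IsDissocSet G D
  isDissocSet_erase : IsDissocSet G (D.erase t)
  joined : W = ∅ ∨ ∃ p, IsJoinedByEdge G W D p t

/-- `Peelable G k W` holds if `k` successive removals of pendant pieces turn `W` into a dissociation
set. -/
inductive Peelable [DecidableEq V] (G : SimpleGraph V) : ℕ → Finset V → Prop
  | base {W : Finset V} : IsDissocSet G W → Peelable G 0 W
  | step {k : ℕ} {W D : Finset V} {t : V} :
      Peelable G k W → IsPendant G W D t → Peelable G (k + 1) (W ∪ D)

namespace IsPendant

variable [DecidableEq V]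

theorem disjoint (h : IsPendant G W D t) : Disjoint W D := by
  obtain rfl | ⟨p, hp⟩ := h.joined
  exacts [disjoint_empty_left D, hp.disjoint]

theorem eq_of_adj (h : IsPendant G W D t) (hu : u ∈ W) (hv : v ∈ D) (huv : G.Adj u v) :
    v = t := by
  obtain rfl | ⟨p, hp⟩ := h.joined
  exacts [absurd hu (notMem_empty u), (hp.unique u hu v hv huv).2]

theorem three_le_card (h : IsPendant G W D t) : 3 ≤ #D := by
  obtain ⟨b, Q, hQD, hQ⟩ := exists_isCherry_subset h.not_isDissocSet
  exact hQ.card_eq ▸ card_le_card hQD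

theorem exists_isCherry (h : IsPendant G W D t) (hD : #D ≤ 3) : ∃ b, IsCherry G b D := by
  obtain ⟨b, Q, hQD, hQ⟩ := exists_isCherry_subset h.not_isDissocSet
  exact ⟨b, eq_of_subset_of_card_le hQD (hQ.card_eq ▸ hD) ▸ hQ⟩

end IsPendant

namespace Peelable

variable [DecidableEq V]

theorem three_mul_le_card (h : Peelable G k W) : 3 * k ≤ #W := by
  induction h with
  | base => simp
  | step _ hD ih =>
    have := hD.three_le_card
    rw [card_union_of_disjoint hD.disjoint]
    omega

theorem card_add_le (h : Peelable G k W) : ∀ X ⊆ W, IsDissocSet G X → #X + k ≤ #W := by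
  induction h with
  | base => exact fun X hX _ ↦ card_le_card hX
  | step _ hD ih =>
    intro X hX hXdis
    have hW := ih _ inter_subset_right (hXdis.mono inter_subset_left)
    have hD' := hXdis.card_inter_lt hD.not_isDissocSet
    rw [card_eq_card_inter_add_card_inter hD.disjoint hX, card_union_of_disjoint hD.disjoint]
    omega

theorem dissocSets_nonempty (h : Peelable G k W) : (dissocSets G k W).Nonempty := by
  induction h with
  | base hW => exact ⟨_, mem_dissocSets.2 ⟨subset_rfl, hW, rfl⟩⟩
  | @step k W D t _ hD ih =>
    obtain ⟨X, hX⟩ := ih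
    obtain ⟨hXW, hXdis, hXcard⟩ := mem_dissocSets.1 hX
    have hdisj : Disjoint X (D.erase t) := hD.disjoint.mono hXW (erase_subset t D)
    refine ⟨X ∪ D.erase t, mem_dissocSets.2 ⟨union_subset_union hXW (erase_subset t D), ?_, ?_⟩⟩
    · refine hXdis.union hD.isDissocSet_erase fun x hx y hy hxy ↦ ?_
      exact (mem_erase.1 hy).1 (hD.eq_of_adj (hXW hx) (mem_erase.1 hy).2 hxy)
    · have := card_erase_add_one hD.mem
      rw [card_union_of_disjoint hdisj, card_union_of_disjoint hD.disjoint]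
      omega

theorem card_dissocSets_le (h : Peelable G k W) : #(dissocSets G k W) ≤ 3 ^ k := by
  induction h with
  | base =>
    refine card_le_one.2 fun X hX Y hY ↦ ?_
    rw [mem_dissocSets] at hX hY
    rw [eq_of_subset_of_card_le hX.1 hX.2.2.ge, eq_of_subset_of_card_le hY.1 hY.2.2.ge]
  | @step k W D t hW hD ih =>
    obtain ⟨b, Q, hQD, hQ⟩ := exists_isCherry_subset hD.not_isDissocSet
    rw [pow_succ']
    refine (card_le_card_mul_of_exists_notMem hD.disjoint hW.card_add_le hD.not_isDissocSet hQD
      subset_rfl (fun X hX ↦ inter_mem_dissocSets hD.disjoint hW.card_add_le hD.not_isDissocSet hX)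
      fun X hX ↦ ?_).trans (Nat.mul_le_mul hQ.card_eq.le ih)
    by_contra! hQX
    exact hQ.not_isDissocSet ((mem_dissocSets.1 hX).2.1.mono hQX)

theorem mem_dissocSets_of_isMaxDissocSet [Fintype V] (h : Peelable G k univ)
    (hX : IsMaxDissocSet G X) : X ∈ dissocSets G k univ := by
  obtain ⟨Y, hY⟩ := h.dissocSets_nonempty
  obtain ⟨-, hYdis, hYcard⟩ := mem_dissocSets.1 hY
  have hbdd : BddAbove {n | ∃ S : Finset V, IsDissocSet G S ∧ #S = n} :=
    ⟨Fintype.card V, by rintro n ⟨S, -, rfl⟩; exact card_le_univ S⟩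
  have hYX : #Y ≤ #X := hX.2 ▸ le_csSup hbdd ⟨Y, hYdis, rfl⟩
  have hXle := h.card_add_le X (subset_univ X) hX.1
  exact mem_dissocSets.2 ⟨subset_univ X, hX.1, by omega⟩

end Peelable

/-! ### Peeling trees -/

/-- `u` is the parent of `v` in the tree `G` rooted at `r`. -/
def IsParent (G : SimpleGraph V) (r u v : V) : Prop :=
  G.Adj u v ∧ G.dist r v = G.dist r u + 1

/-- `v` lies in the subtree below `t` (possibly `v = t`) in the tree `G` rooted at `r`. -/
def IsDescendant (G : SimpleGraph V) (r : V) : V → V → Prop :=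
  Relation.ReflTransGen (IsParent G r)

open Classical in
/-- The vertices of `W` in the subtree below `t` of the tree `G` rooted at `r`. -/
def descendants (G : SimpleGraph V) (r : V) (W : Finset V) (t : V) : Finset V :=
  {v ∈ W | IsDescendant G r t v}

theorem mem_descendants : v ∈ descendants G r W t ↔ v ∈ W ∧ IsDescendant G r t v := by
  simp [descendants]

theorem descendants_subset : descendants G r W t ⊆ W := fun _ hv ↦ (mem_descendants.1 hv).1

theorem self_mem_descendants (ht : t ∈ W) : t ∈ descendants G r W t :=
  mem_descendants.2 ⟨ht, .refl⟩

theorem IsDescendant.dist_le (h : IsDescendant G r t v) : G.dist r t ≤ G.dist r v := by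
  induction h with
  | refl => rfl
  | tail _ huv ih => exact ih.trans (huv.2 ▸ Nat.le_succ _)

theorem IsDescendant.dist_lt (h : IsDescendant G r t v) (hne : v ≠ t) :
    G.dist r t < G.dist r v := by
  obtain rfl | ⟨u, htu, huv⟩ := h.cases_tail
  · exact absurd rfl hne
  · exact huv.2 ▸ Nat.lt_succ_of_le (IsDescendant.dist_le htu)

section Rooted

variable (hG : G.IsTree)

include hG

theorem isParent_or_isParent_of_adj (r : V) (huv : G.Adj u v) :
    IsParent G r u v ∨ IsParent G r v u :=
  (hG.dist_eq_dist_add_one_of_adj r huv).symm.imp (⟨huv, ·⟩) (⟨huv.symm, ·⟩)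

theorem IsParent.unique (hu : IsParent G r u v) (hw : IsParent G r w v) : u = w := by
  obtain ⟨P, hP⟩ := hG.connected.exists_walk_length_eq_dist r u
  obtain ⟨Q, hQ⟩ := hG.connected.exists_walk_length_eq_dist r w
  have hP' : (P.concat hu.1).IsPath :=
    Walk.isPath_of_length_eq_dist _ (by rw [Walk.length_concat, hP, hu.2])
  have hQ' : (Q.concat hw.1).IsPath :=
    Walk.isPath_of_length_eq_dist _ (by rw [Walk.length_concat, hQ, hw.2])
  have hPQ := (hG.existsUnique_path r v).unique hP' hQ'
  simpa using congrArg Walk.penultimate hPQ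

theorem IsDescendant.of_isParent (hv : IsDescendant G r t v) (hne : v ≠ t)
    (huv : IsParent G r u v) : IsDescendant G r t u := by
  obtain rfl | ⟨w, htw, hwv⟩ := hv.cases_tail
  · exact absurd rfl hne
  · exact huv.unique hG hwv ▸ htw

theorem isDescendant_root (r v : V) : IsDescendant G r r v := by
  have hreach := (reachable_iff_reflTransGen r v).1 (hG.connected r v)
  induction hreach with
  | refl => exact .refl
  | @tail u v _ huv ih =>
    obtain h | h := isParent_or_isParent_of_adj hG r huv
    · exact ih.tail h
    · refine ih.of_isParent hG ?_ h
      rintro rfl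
      simpa using h.2

theorem IsDescendant.eq_and_isParent_of_adj (hv : IsDescendant G r t v)
    (hu : ¬IsDescendant G r t u) (huv : G.Adj u v) : v = t ∧ IsParent G r u t := by
  obtain h | h := isParent_or_isParent_of_adj hG r huv
  · have hvt : v = t := by
      by_contra hne
      exact hu (hv.of_isParent hG hne h)
    exact ⟨hvt, hvt ▸ h⟩
  · exact absurd (hv.tail h) hu

theorem exists_forall_isDescendant_of_adj_adj (r : V) (hvu : G.Adj v u) (hvw : G.Adj v w)
    (huw : u ≠ w) : ∃ s ∈ ({v, u, w} : Set V), ∀ x ∈ ({v, u, w} : Set V), IsDescendant G r s x := by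
  obtain hu | hu := isParent_or_isParent_of_adj hG r hvu <;>
    obtain hw | hw := isParent_or_isParent_of_adj hG r hvw
  · refine ⟨v, .inl rfl, ?_⟩
    rintro x (rfl | rfl | rfl)
    exacts [.refl, .single hu, .single hw]
  · refine ⟨w, .inr (.inr rfl), ?_⟩
    rintro x (rfl | rfl | rfl)
    exacts [.single hw, .tail (.single hw) hu, .refl]
  · refine ⟨u, .inr (.inl rfl), ?_⟩
    rintro x (rfl | rfl | rfl)
    exacts [.single hu, .refl, .tail (.single hu) hw]
  · exact absurd (hu.unique hG hw) huw

variable [DecidableEq V]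

/-- Take a deepest `t` whose subtree is not a dissociation set. -/
theorem exists_isDissocSet_descendants_erase (r : V) (hW : ¬IsDissocSet G W) :
    ∃ t ∈ W, ¬IsDissocSet G (descendants G r W t) ∧
      IsDissocSet G ((descendants G r W t).erase t) := by
  classical
  have htop : ∀ Y ⊆ W, ¬IsDissocSet G Y → ∃ s ∈ Y, ¬IsDissocSet G (descendants G r W s) := by
    intro Y hYW hY
    simp only [IsDissocSet, not_forall] at hY
    obtain ⟨v, hv, u, hu, w, hw, hvu, hvw, huw⟩ := hY
    obtain ⟨s, hs, hdesc⟩ := exists_forall_isDescendant_of_adj_adj hG r hvu hvw huw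
    have hsY : s ∈ Y := by
      obtain rfl | rfl | rfl := hs
      exacts [hv, hu, hw]
    refine ⟨s, hsY, fun h ↦ huw (h v ?_ u ?_ w ?_ hvu hvw)⟩
    exacts [mem_descendants.2 ⟨hYW hv, hdesc v (by simp)⟩,
      mem_descendants.2 ⟨hYW hu, hdesc u (by simp)⟩,
      mem_descendants.2 ⟨hYW hw, hdesc w (by simp)⟩]
  obtain ⟨s, hsW, hs⟩ := htop W subset_rfl hW
  obtain ⟨t, ht, hmax⟩ := exists_max_image {t ∈ W | ¬IsDissocSet G (descendants G r W t)}
    (G.dist r) ⟨s, mem_filter.2 ⟨hsW, hs⟩⟩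
  obtain ⟨htW, htD⟩ := mem_filter.1 ht
  refine ⟨t, htW, htD, ?_⟩
  by_contra hY
  obtain ⟨s, hs, hsD⟩ := htop _ ((erase_subset _ _).trans descendants_subset) hY
  obtain ⟨hst, hs⟩ := mem_erase.1 hs
  obtain ⟨hsW, hts⟩ := mem_descendants.1 hs
  exact (hts.dist_lt hst).not_ge (hmax s (mem_filter.2 ⟨hsW, hsD⟩))

theorem isPendant_descendants (hW : ∀ v ∈ W, ∀ u, IsParent G r u v → u ∈ W) (ht : t ∈ W)
    (hD : ¬IsDissocSet G (descendants G r W t))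
    (hDt : IsDissocSet G ((descendants G r W t).erase t)) :
    IsPendant G (W \ descendants G r W t) (descendants G r W t) t := by
  refine ⟨self_mem_descendants ht, hD, hDt, ?_⟩
  obtain h | ⟨p, -, hpt⟩ := (isDescendant_root hG r t).cases_tail
  · subst h
    exact .inl (sdiff_eq_empty_iff_subset.2 fun v hv ↦
      mem_descendants.2 ⟨hv, isDescendant_root hG t v⟩)
  have hp : p ∉ descendants G r W t := fun h ↦ by
    have := (mem_descendants.1 h).2.dist_lt hpt.1.ne
    have := hpt.2
    omega
  refine .inr ⟨p, disjoint_sdiff_self_left, mem_sdiff.2 ⟨hW t ht p hpt, hp⟩,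
    self_mem_descendants ht, hpt.1, fun x hx y hy hxy ↦ ?_⟩
  obtain ⟨hxW, hxt⟩ := mem_sdiff.1 hx
  obtain ⟨hyt, hxt⟩ := (mem_descendants.1 hy).2.eq_and_isParent_of_adj hG
    (fun h ↦ hxt (mem_descendants.2 ⟨hxW, h⟩)) hxy
  exact ⟨hxt.unique hG hpt, hyt⟩

theorem exists_peelable_of_isParent_mem (hW : ∀ v ∈ W, ∀ u, IsParent G r u v → u ∈ W) :
    ∃ k, Peelable G k W := by
  induction W using Finset.strongInduction with
  | H W ih =>
  by_cases hdis : IsDissocSet G W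
  · exact ⟨0, .base hdis⟩
  obtain ⟨t, ht, hD, hDt⟩ := exists_isDissocSet_descendants_erase hG r hdis
  have hlt : W \ descendants G r W t ⊂ W :=
    sdiff_ssubset descendants_subset ⟨t, self_mem_descendants ht⟩
  obtain ⟨k, hk⟩ := ih _ hlt fun v hv u huv ↦ by
    obtain ⟨hvW, hvt⟩ := mem_sdiff.1 hv
    refine mem_sdiff.2 ⟨hW v hvW u huv, fun hu ↦ hvt ?_⟩
    exact mem_descendants.2 ⟨hvW, (mem_descendants.1 hu).2.tail huv⟩
  have hstep := hk.step (isPendant_descendants hG hW ht hD hDt)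
  rw [sdiff_union_of_subset descendants_subset] at hstep
  exact ⟨k + 1, hstep⟩

theorem exists_peelable_univ [Fintype V] : ∃ k, Peelable G k univ := by
  obtain ⟨r⟩ := hG.connected.nonempty
  exact exists_peelable_of_isParent_mem (r := r) hG fun _ _ u _ ↦ mem_univ u

end Rooted

/-! ### Sets omitting or exposing a vertex -/

/-- `w` is exposed by `X` (in the sense of matchings): it is not an endpoint of an edge of `G[X]`.
Vertices outside `X` are exposed. -/
def Exposed (G : SimpleGraph V) (X : Finset V) (w : V) : Prop :=
  w ∈ X → ∀ u ∈ X, ¬G.Adj w u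

theorem Exposed.mono (h : Exposed G Y w) (hXY : X ⊆ Y) : Exposed G X w :=
  fun hw u hu ↦ h (hXY hw) u (hXY hu)

open Classical in
/-- The members of `dissocSets G k W` that do not contain `w`. -/
def omitting (G : SimpleGraph V) (k : ℕ) (W : Finset V) (w : V) : Finset (Finset V) :=
  {X ∈ dissocSets G k W | w ∉ X}

open Classical in
/-- The members of `dissocSets G k W` that expose `w`. -/
def exposing (G : SimpleGraph V) (k : ℕ) (W : Finset V) (w : V) : Finset (Finset V) :=
  {X ∈ dissocSets G k W | Exposed G X w}

theorem mem_omitting : X ∈ omitting G k W w ↔ X ∈ dissocSets G k W ∧ w ∉ X := by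
  simp [omitting]

theorem mem_exposing : X ∈ exposing G k W w ↔ X ∈ dissocSets G k W ∧ Exposed G X w := by
  simp [exposing]

theorem omitting_subset : omitting G k W w ⊆ dissocSets G k W := fun _ hX ↦ (mem_omitting.1 hX).1

theorem exposing_subset : exposing G k W w ⊆ dissocSets G k W := fun _ hX ↦ (mem_exposing.1 hX).1

/-- The number of members of `dissocSets G k W` that expose `w`, where those omitting `v` are
counted twice and those in which `v` has a neighbour are not counted. It bounds how many more sets
expose `w` after a cherry has been joined to `W` by an edge at `v`. -/
def pairCount [DecidableEq V] (G : SimpleGraph V) (k : ℕ) (W : Finset V) (w v : V) : ℕ :=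
  #(exposing G k W w ∩ omitting G k W v) + #(exposing G k W w ∩ exposing G k W v)

section Split

variable [DecidableEq V] (hWD : Disjoint W D) (hW : ∀ X ⊆ W, IsDissocSet G X → #X + k ≤ #W)
  (hD : ¬IsDissocSet G D)

include hWD hW hD

theorem inter_mem_omitting (hX : X ∈ omitting G (k + 1) (W ∪ D) w) :
    X ∩ W ∈ omitting G k W w :=
  mem_omitting.2 ⟨inter_mem_dissocSets hWD hW hD (omitting_subset hX),
    fun h ↦ (mem_omitting.1 hX).2 (mem_inter.1 h).1⟩

theorem inter_mem_exposing (hX : X ∈ exposing G (k + 1) (W ∪ D) w) :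
    X ∩ W ∈ exposing G k W w :=
  mem_exposing.2 ⟨inter_mem_dissocSets hWD hW hD (exposing_subset hX),
    (mem_exposing.1 hX).2.mono inter_subset_left⟩

theorem card_omitting_le_of_mem (hw : w ∈ D) :
    #(omitting G (k + 1) (W ∪ D) w) ≤ #(dissocSets G k W) :=
  card_le_of_forall_notMem hWD hW hD hw omitting_subset
    (fun _ hX ↦ omitting_subset (inter_mem_omitting hWD hW hD hX)) fun _ hX ↦ (mem_omitting.1 hX).2

end Split

section Cherry

variable [DecidableEq V] (hWD : Disjoint W D) (hW : ∀ X ⊆ W, IsDissocSet G X → #X + k ≤ #W)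
  (hD : IsCherry G b D) {𝒜 ℬ : Finset (Finset V)}

include hWD hW hD

theorem notMem_or_center_notMem (hw : w ∈ D) (hX : X ∈ exposing G (k + 1) (W ∪ D) w) :
    w ∉ X ∨ b ∉ X := by
  obtain ⟨hX, hXw⟩ := mem_exposing.1 hX
  obtain ⟨d, hdD, hd⟩ := exists_forall_notMem_iff_eq hWD hW hD.not_isDissocSet hX
  by_contra! h
  have hdb : d ≠ b := fun hdb ↦ (hd d hdD).2 rfl (hdb ▸ h.2)
  obtain ⟨u, hu, hud, hwu⟩ := hD.exists_adj_ne hw hdb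
  exact hXw h.1 u (not_not.1 fun huX ↦ hud ((hd u hu).1 huX)) hwu

theorem center_notMem_of_mem_exposing (hw : w ∈ D) (hv : v ∈ D) (hwv : w ≠ v)
    (hXw : X ∈ exposing G (k + 1) (W ∪ D) w) (hXv : X ∈ exposing G (k + 1) (W ∪ D) v) :
    b ∉ X := by
  obtain ⟨d, -, hd⟩ := exists_forall_notMem_iff_eq hWD hW hD.not_isDissocSet (mem_exposing.1 hXw).1
  intro hb
  have hwX := (notMem_or_center_notMem hWD hW hD hw hXw).resolve_right (not_not.2 hb)
  have hvX := (notMem_or_center_notMem hWD hW hD hv hXv).resolve_right (not_not.2 hb)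
  exact hwv (((hd w hw).1 hwX).trans ((hd v hv).1 hvX).symm)

theorem card_le_two_mul_of_subset_exposing (h𝒜 : 𝒜 ⊆ exposing G (k + 1) (W ∪ D) w)
    (hℬ : ∀ X ∈ 𝒜, X ∩ W ∈ ℬ) (hw : w ∈ D) : #𝒜 ≤ 2 * #ℬ := by
  refine (card_le_card_mul_of_exists_notMem hWD hW hD.not_isDissocSet (E := {w, b})
    (by simp [insert_subset_iff, hw, hD.mem]) (h𝒜.trans exposing_subset) hℬ fun X hX ↦ ?_).trans
    (Nat.mul_le_mul_right _ card_le_two)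
  simpa using notMem_or_center_notMem hWD hW hD hw (h𝒜 hX)

theorem card_le_three_mul (h𝒜 : 𝒜 ⊆ dissocSets G (k + 1) (W ∪ D))
    (hℬ : ∀ X ∈ 𝒜, X ∩ W ∈ ℬ) : #𝒜 ≤ 3 * #ℬ := by
  rw [← hD.card_eq]
  refine card_le_card_mul_of_exists_notMem hWD hW hD.not_isDissocSet subset_rfl h𝒜 hℬ fun X hX ↦ ?_
  obtain ⟨d, hdD, hd⟩ := exists_forall_notMem_iff_eq hWD hW hD.not_isDissocSet (h𝒜 hX)
  exact ⟨d, hdD, (hd d hdD).2 rfl⟩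

theorem card_omitting_le_three_mul :
    #(omitting G (k + 1) (W ∪ D) w) ≤ 3 * #(omitting G k W w) :=
  card_le_three_mul hWD hW hD omitting_subset fun _ ↦ inter_mem_omitting hWD hW hD.not_isDissocSet

theorem card_exposing_le_two_mul_of_mem (hw : w ∈ D) :
    #(exposing G (k + 1) (W ∪ D) w) ≤ 2 * #(dissocSets G k W) :=
  card_le_two_mul_of_subset_exposing hWD hW hD subset_rfl
    (fun _ hX ↦ exposing_subset (inter_mem_exposing hWD hW hD.not_isDissocSet hX)) hw

theorem pairCount_le_three_mul :
    pairCount G (k + 1) (W ∪ D) w v ≤ 3 * pairCount G k W w v := by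
  have hD' := hD.not_isDissocSet
  rw [pairCount, pairCount, mul_add]
  refine add_le_add
    (card_le_three_mul hWD hW hD (inter_subset_left.trans exposing_subset) fun X hX ↦ ?_)
    (card_le_three_mul hWD hW hD (inter_subset_left.trans exposing_subset) fun X hX ↦ ?_) <;>
    obtain ⟨hXw, hXv⟩ := mem_inter.1 hX
  · exact mem_inter.2 ⟨inter_mem_exposing hWD hW hD' hXw, inter_mem_omitting hWD hW hD' hXv⟩
  · exact mem_inter.2 ⟨inter_mem_exposing hWD hW hD' hXw, inter_mem_exposing hWD hW hD' hXv⟩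

theorem pairCount_le_of_mem_of_mem (hw : w ∈ D) (hv : v ∈ D) (hwv : w ≠ v) :
    pairCount G (k + 1) (W ∪ D) w v ≤ 2 * #(dissocSets G k W) := by
  have hD' := hD.not_isDissocSet
  have hcenter X := center_notMem_of_mem_exposing hWD hW hD hw hv hwv (X := X)
  rw [pairCount, two_mul]
  refine add_le_add
    (card_le_of_forall_notMem hWD hW hD' hv (inter_subset_left.trans exposing_subset)
      (fun X hX ↦ ?_) fun X hX ↦ (mem_omitting.1 (mem_inter.1 hX).2).2)
    (card_le_of_forall_notMem hWD hW hD' hD.mem (inter_subset_left.trans exposing_subset)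
      (fun X hX ↦ ?_) fun X hX ↦ hcenter X (mem_inter.1 hX).1 (mem_inter.1 hX).2) <;>
    exact exposing_subset (inter_mem_exposing hWD hW hD' (mem_inter.1 hX).1)

theorem pairCount_le_of_mem_left (hw : w ∈ D) :
    pairCount G (k + 1) (W ∪ D) w v ≤ 2 * #(omitting G k W v) + 2 * #(exposing G k W v) :=
  add_le_add
    (card_le_two_mul_of_subset_exposing hWD hW hD inter_subset_left (fun _ hX ↦
      inter_mem_omitting hWD hW hD.not_isDissocSet (mem_inter.1 hX).2) hw)
    (card_le_two_mul_of_subset_exposing hWD hW hD inter_subset_left (fun _ hX ↦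
      inter_mem_exposing hWD hW hD.not_isDissocSet (mem_inter.1 hX).2) hw)

theorem pairCount_le_of_mem_right (hv : v ∈ D) :
    pairCount G (k + 1) (W ∪ D) w v ≤ #(exposing G k W w) + 2 * #(exposing G k W w) :=
  add_le_add
    (card_le_of_forall_notMem hWD hW hD.not_isDissocSet hv
      (inter_subset_left.trans exposing_subset)
      (fun _ hX ↦ inter_mem_exposing hWD hW hD.not_isDissocSet (mem_inter.1 hX).1)
      fun _ hX ↦ (mem_omitting.1 (mem_inter.1 hX).2).2)
    (card_le_two_mul_of_subset_exposing hWD hW hD inter_subset_right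
      (fun _ hX ↦ inter_mem_exposing hWD hW hD.not_isDissocSet (mem_inter.1 hX).1) hv)

end Cherry

/-! ### A cherry joined by an edge -/

namespace IsJoinedByEdge

theorem exposed_inter [DecidableEq V] (hj : IsJoinedByEdge G W D p q) (hX : IsDissocSet G X)
    (hq : q ∈ X) : Exposed G (X ∩ W) p := by
  intro hp u hu hpu
  have huq := hX p (mem_inter.1 hp).1 u (mem_inter.1 hu).1 q hq hpu hj.adj
  exact disjoint_left.1 hj.disjoint (mem_inter.1 hu).2 (huq ▸ hj.right_mem)

theorem notMem_of_adj (hj : IsJoinedByEdge G W D p q) (hX : IsDissocSet G X) (hq : q ∈ X)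
    (hvX : v ∈ X) (hvD : v ∈ D) (hqv : G.Adj q v) : p ∉ X := by
  intro hp
  have hpv := hX q hq p hp v hvX hj.adj.symm hqv
  exact disjoint_left.1 hj.disjoint hj.left_mem (hpv ▸ hvD)

end IsJoinedByEdge

section Joined

variable [DecidableEq V] (hW : ∀ X ⊆ W, IsDissocSet G X → #X + k ≤ #W) (hD : IsCherry G b D)
  (hj : IsJoinedByEdge G W D p q)

include hW hD hj

theorem card_le_card_add_card_add_card {𝒜 ℬ 𝒞 ℰ : Finset (Finset V)}
    (h𝒜 : 𝒜 ⊆ dissocSets G (k + 1) (W ∪ D)) (hℬ : ∀ X ∈ 𝒜, X ∩ W ∈ ℬ)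
    (h𝒞 : ∀ Y ∈ ℬ, p ∉ Y → Y ∈ 𝒞) (hℰ : ∀ Y ∈ ℬ, Exposed G Y p → Y ∈ ℰ) :
    #𝒜 ≤ #ℬ + #𝒞 + #ℰ := by
  obtain ⟨e, f, rfl, hqf⟩ := hD.exists_eq_insert_and_adj hj.right_mem
  have hsum := card_le_sum_of_exists_notMem hj.disjoint hW hD.not_isDissocSet (s := univ)
    (d := ![q, e, f]) (ℬ := ![ℬ, 𝒞, ℰ]) (by simp [Fin.forall_fin_succ]) h𝒜 fun X hX ↦ ?_
  · simpa [Fin.sum_univ_three] using hsum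
  have hXdis := (mem_dissocSets.1 (h𝒜 hX)).2.1
  obtain ⟨d, hdD, hd⟩ := exists_forall_notMem_iff_eq hj.disjoint hW hD.not_isDissocSet (h𝒜 hX)
  have hdX := (hd d hdD).2 rfl
  by_cases hq : q ∈ X
  · by_cases hf : f ∈ X
    · have he : e ∉ X := by
        obtain rfl | rfl | rfl : d = q ∨ d = e ∨ d = f := by simpa using hdD
        exacts [absurd hq hdX, hdX, absurd hf hdX]
      have hp := hj.notMem_of_adj hXdis hq hf (by simp) hqf
      exact ⟨1, mem_univ _, he, h𝒞 _ (hℬ X hX) fun h ↦ hp (mem_inter.1 h).1⟩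
    · exact ⟨2, mem_univ _, hf, hℰ _ (hℬ X hX) (hj.exposed_inter hXdis hq)⟩
  · exact ⟨0, mem_univ _, hq, hℬ X hX⟩

theorem card_dissocSets_le_of_isJoinedByEdge :
    #(dissocSets G (k + 1) (W ∪ D)) ≤
      #(dissocSets G k W) + #(omitting G k W p) + #(exposing G k W p) :=
  card_le_card_add_card_add_card hW hD hj subset_rfl
    (fun _ ↦ inter_mem_dissocSets hj.disjoint hW hD.not_isDissocSet)
    (fun _ hY hp ↦ mem_omitting.2 ⟨hY, hp⟩) fun _ hY hp ↦ mem_exposing.2 ⟨hY, hp⟩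

theorem card_exposing_le_card_exposing_add_pairCount :
    #(exposing G (k + 1) (W ∪ D) w) ≤ #(exposing G k W w) + pairCount G k W w p := by
  rw [pairCount, ← add_assoc]
  exact card_le_card_add_card_add_card hW hD hj exposing_subset
    (fun _ ↦ inter_mem_exposing hj.disjoint hW hD.not_isDissocSet)
    (fun _ hY hp ↦ mem_inter.2 ⟨hY, mem_omitting.2 ⟨exposing_subset hY, hp⟩⟩)
    fun _ hY hp ↦ mem_inter.2 ⟨hY, mem_exposing.2 ⟨exposing_subset hY, hp⟩⟩

theorem card_exposing_end_le :
    #(exposing G (k + 1) (W ∪ D) p) ≤ #(exposing G k W p) + 2 * #(omitting G k W p) := by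
  obtain ⟨e, f, rfl, -⟩ := hD.exists_eq_insert_and_adj hj.right_mem
  have hsum := card_le_sum_of_exists_notMem hj.disjoint hW hD.not_isDissocSet (s := univ)
    (d := ![q, e, f]) (ℬ := ![exposing G k W p, omitting G k W p, omitting G k W p])
    (by simp [Fin.forall_fin_succ]) (exposing_subset (w := p)) fun X hX ↦ ?_
  · simpa [Fin.sum_univ_three, add_assoc, two_mul] using hsum
  have hXp := inter_mem_exposing hj.disjoint hW hD.not_isDissocSet hX
  by_cases hq : q ∈ X
  · have hp : p ∉ X := fun hp ↦ (mem_exposing.1 hX).2 hp q hq hj.adj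
    have hXp' : X ∩ W ∈ omitting G k W p :=
      inter_mem_omitting hj.disjoint hW hD.not_isDissocSet (mem_omitting.2 ⟨exposing_subset hX, hp⟩)
    obtain ⟨d, hdD, hd⟩ := exists_forall_notMem_iff_eq hj.disjoint hW hD.not_isDissocSet
      (exposing_subset hX)
    have hdX := (hd d hdD).2 rfl
    obtain rfl | rfl | rfl : d = q ∨ d = e ∨ d = f := by simpa using hdD
    exacts [absurd hq hdX, ⟨1, mem_univ _, hdX, hXp'⟩, ⟨2, mem_univ _, hdX, hXp'⟩]
  · exact ⟨0, mem_univ _, hq, hXp⟩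

theorem exists_forall_notMem_or_notMem_and_end_notMem (hw : w ∈ D) :
    ∃ c ∈ D, ∃ d ∈ D, ∀ X ∈ exposing G (k + 1) (W ∪ D) w, c ∉ X ∨ d ∉ X ∧ p ∉ X := by
  obtain rfl | hqw := eq_or_ne q w
  · refine ⟨q, hw, b, hD.mem, fun X hX ↦ or_iff_not_imp_left.2 fun hq ↦ ?_⟩
    exact ⟨(notMem_or_center_notMem hj.disjoint hW hD hw hX).resolve_left hq,
      fun hp ↦ (mem_exposing.1 hX).2 (not_not.1 hq) p hp hj.adj.symm⟩
  · refine ⟨b, hD.mem, w, hw, fun X hX ↦ or_iff_not_imp_left.2 fun hb ↦ ?_⟩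
    have hwX := (notMem_or_center_notMem hj.disjoint hW hD hw hX).resolve_right hb
    obtain ⟨d, -, hd⟩ := exists_forall_notMem_iff_eq hj.disjoint hW hD.not_isDissocSet
      (exposing_subset hX)
    obtain rfl := (hd w hw).1 hwX
    have hmem : ∀ x ∈ D, x ≠ w → x ∈ X := fun x hx hxw ↦ not_not.1 fun h ↦ hxw ((hd x hx).1 h)
    obtain ⟨u, hu, huw, hqu⟩ := hD.exists_adj_ne hj.right_mem (v := w) fun h ↦ hb (h ▸ hwX)
    exact ⟨hwX, hj.notMem_of_adj (mem_dissocSets.1 (exposing_subset hX)).2.1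
      (hmem q hj.right_mem hqw) (hmem u hu huw) hu hqu⟩

theorem card_exposing_le_of_mem (hw : w ∈ D) :
    #(exposing G (k + 1) (W ∪ D) w) ≤ #(dissocSets G k W) + #(omitting G k W p) := by
  have hD' := hD.not_isDissocSet
  obtain ⟨c, hc, d, hd, hcd⟩ := exists_forall_notMem_or_notMem_and_end_notMem hW hD hj hw
  have hsum := card_le_sum_of_exists_notMem hj.disjoint hW hD' (s := univ)
    (d := ![c, d]) (ℬ := ![dissocSets G k W, omitting G k W p])
    (by simp [Fin.forall_fin_two, hc, hd]) (exposing_subset (w := w)) fun X hX ↦ ?_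
  · simpa using hsum
  obtain hcX | ⟨hdX, hpX⟩ := hcd X hX
  · exact ⟨0, mem_univ _, hcX, exposing_subset (inter_mem_exposing hj.disjoint hW hD' hX)⟩
  · exact ⟨1, mem_univ _, hdX,
      inter_mem_omitting hj.disjoint hW hD' (mem_omitting.2 ⟨exposing_subset hX, hpX⟩)⟩

end Joined

/-! ### Counting through a chain of cherries -/

/-- The bounds on the sets omitting exactly `k + 1` vertices of `W` that are preserved when a cherry
is joined to `W` by an edge. -/
structure CountBounds [DecidableEq V] (G : SimpleGraph V) (k : ℕ) (W : Finset V) : Prop where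
  card_dissocSets_le : #(dissocSets G (k + 1) W) ≤ 3 ^ k + k + 2
  card_omitting_le : ∀ w ∈ W, #(omitting G (k + 1) W w) ≤ 3 ^ k
  card_exposing_le : ∀ w ∈ W, #(exposing G (k + 1) W w) ≤ 3 ^ k + 1
  pairCount_le : ∀ w ∈ W, ∀ v ∈ W, w ≠ v → pairCount G (k + 1) W w v ≤ 2 * 3 ^ k

theorem IsCherry.countBounds [DecidableEq V] (hD : IsCherry G b D) : CountBounds G 0 D := by
  have hdisj := disjoint_empty_left D
  have hempty : ∀ X ⊆ (∅ : Finset V), IsDissocSet G X → #X + 0 ≤ #(∅ : Finset V) :=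
    fun X hX _ ↦ card_le_card hX
  have hcard : #(dissocSets G 0 ∅) = 1 := by rw [dissocSets_zero_empty, card_singleton]
  refine ⟨?_, fun w hw ↦ ?_, fun w hw ↦ ?_, fun w hw v hv hwv ↦ ?_⟩
  · simpa [hcard] using card_le_three_mul hdisj hempty hD subset_rfl fun X ↦
      inter_mem_dissocSets hdisj hempty hD.not_isDissocSet
  · simpa [hcard] using card_omitting_le_of_mem hdisj hempty hD.not_isDissocSet hw
  · simpa [hcard] using card_exposing_le_two_mul_of_mem hdisj hempty hD hw
  · simpa [hcard] using pairCount_le_of_mem_of_mem hdisj hempty hD hw hv hwv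

namespace CountBounds

variable [DecidableEq V] (h : CountBounds G k W) (hW : ∀ X ⊆ W, IsDissocSet G X → #X + (k + 1) ≤ #W)
  (hD : IsCherry G b D) (hj : IsJoinedByEdge G W D p q)

include h hW hD hj

theorem card_exposing_union_le (hw : w ∈ W ∪ D) :
    #(exposing G (k + 1 + 1) (W ∪ D) w) ≤ 3 ^ (k + 1) + 1 := by
  have hk : k + 1 ≤ 3 ^ k := Nat.lt_pow_self (by norm_num)
  have hp := h.card_omitting_le p hj.left_mem
  rw [pow_succ]
  obtain hw | hw := mem_union.1 hw
  · have hexp := h.card_exposing_le w hw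
    obtain rfl | hwp := eq_or_ne w p
    · have := card_exposing_end_le hW hD hj
      omega
    · have hpair := h.pairCount_le w hw p hj.left_mem hwp
      have := card_exposing_le_card_exposing_add_pairCount hW hD hj (w := w)
      omega
  · have := card_exposing_le_of_mem hW hD hj hw
    have := h.card_dissocSets_le
    omega

theorem pairCount_union_le (hw : w ∈ W ∪ D) (hv : v ∈ W ∪ D) (hwv : w ≠ v) :
    pairCount G (k + 1 + 1) (W ∪ D) w v ≤ 2 * 3 ^ (k + 1) := by
  have hk : k + 1 ≤ 3 ^ k := Nat.lt_pow_self (by norm_num)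
  rw [pow_succ]
  obtain hw | hw := mem_union.1 hw <;> obtain hv | hv := mem_union.1 hv
  · have := pairCount_le_three_mul hj.disjoint hW hD (w := w) (v := v)
    have := h.pairCount_le w hw v hv hwv
    omega
  · have := pairCount_le_of_mem_right hj.disjoint hW hD hv (w := w)
    have := h.card_exposing_le w hw
    omega
  · have := pairCount_le_of_mem_left hj.disjoint hW hD hw (v := v)
    have := h.card_omitting_le v hv
    have := h.card_exposing_le v hv
    omega
  · have := pairCount_le_of_mem_of_mem hj.disjoint hW hD hw hv hwv
    have := h.card_dissocSets_le
    omega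

theorem union : CountBounds G (k + 1) (W ∪ D) where
  card_dissocSets_le := by
    have := card_dissocSets_le_of_isJoinedByEdge hW hD hj
    have := h.card_dissocSets_le
    have := h.card_omitting_le p hj.left_mem
    have := h.card_exposing_le p hj.left_mem
    rw [pow_succ]
    omega
  card_omitting_le w hw := by
    have hk : k + 1 ≤ 3 ^ k := Nat.lt_pow_self (by norm_num)
    rw [pow_succ]
    obtain hw | hw := mem_union.1 hw
    · have := card_omitting_le_three_mul hj.disjoint hW hD (w := w)
      have := h.card_omitting_le w hw
      omega
    · have := card_omitting_le_of_mem hj.disjoint hW hD.not_isDissocSet hw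
      have := h.card_dissocSets_le
      omega
  card_exposing_le _ hw := h.card_exposing_union_le hW hD hj hw
  pairCount_le _ hw _ hv hwv := h.pairCount_union_le hW hD hj hw hv hwv

end CountBounds

theorem Peelable.countBounds [DecidableEq V] (h : Peelable G (k + 1) W) (hcard : #W = 3 * (k + 1)) :
    CountBounds G k W := by
  generalize hn : k + 1 = n at h
  induction h generalizing k with
  | base => omega
  | @step n W D t hW hD ih =>
    obtain rfl : k = n := by omega
    have hWle := hW.three_mul_le_card
    have hDle := hD.three_le_card
    rw [card_union_of_disjoint hD.disjoint] at hcard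
    obtain ⟨b, hb⟩ := hD.exists_isCherry (by omega)
    obtain rfl | ⟨p, hp⟩ := hD.joined
    · obtain rfl : k = 0 := by simpa using hWle
      simpa using hb.countBounds
    · have hWpos := card_pos.2 ⟨p, hp.left_mem⟩
      obtain ⟨j, rfl⟩ : ∃ j, k = j + 1 := Nat.exists_eq_succ_of_ne_zero (by omega)
      exact (ih (by omega) rfl).union hW.card_add_le hb hp

end

/-- A tree on `3m` vertices (`m ≥ 1`) has at most `3^(m-1) + m + 1` maximum dissociation
sets. -/
theorem tree_numMaxDissoc_le_of_card_eq_three_mul {V : Type*} [Fintype V]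
    [DecidableEq V] (T : SimpleGraph V) (hT : T.IsTree) (m : ℕ) (hm : 1 ≤ m)
    (hcard : Fintype.card V = 3 * m) :
    {S : Finset V | IsMaxDissocSet T S}.ncard ≤ 3 ^ (m - 1) + m + 1 := by
  obtain ⟨k, hk⟩ := exists_peelable_univ hT
  have hmax : {S | IsMaxDissocSet T S}.ncard ≤ (dissocSets T k Finset.univ).card := by
    rw [← Set.ncard_coe_finset]
    exact Set.ncard_le_ncard fun S ↦ hk.mem_dissocSets_of_isMaxDissocSet
  have hkm : 3 * k ≤ 3 * m := hcard ▸ Finset.card_univ (α := V) ▸ hk.three_mul_le_card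
  obtain ⟨j, rfl⟩ : ∃ j, m = j + 1 := Nat.exists_eq_succ_of_ne_zero (by omega)
  obtain rfl | hlt : k = j + 1 ∨ k ≤ j := by omega
  · have := (hk.countBounds (Finset.card_univ.trans hcard)).card_dissocSets_le
    simp only [Nat.add_sub_cancel]
    omega
  · have := hk.card_dissocSets_le.trans (Nat.pow_le_pow_right (by norm_num : 0 < 3) hlt)
    simp only [Nat.add_sub_cancel]
    omega
end
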